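/- Let Λ be an artin algebra. The assignment X ↦ X ∩ X^⊥ gives a bijection between contravariantly finite resolving subcategories X of the class P of finitely generated modules of finite projective dimension and equivalence classes of finitely generated tilting Λ-modules, where two tilting modules T, T' are equivalent if add T = add T'. -/

import Mathlib

open CategoryTheory

universe u

/-- The `n`-th Ext group of `A`-modules `M`, `N`. -/
noncomputable abbrev ext {A : Type u} [Ring A] (M N : ModuleCat.{u} A) (n : ℕ) : Type u :=
  ((Ext ℤ (ModuleCat.{u} A) n).obj (Opposite.op M)).obj N

/-- `Ext^i(N, M) = 0` for all `i > 0`. -/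
def ExtVanish {A : Type u} [Ring A] (N M : ModuleCat.{u} A) : Prop :=
  ∀ i, 0 < i → Subsingleton (ext N M i)

/-- `M` has projective dimension at most `n`, i.e. `Ext^i(M, -) = 0` for `i > n`. -/
def pdLE {A : Type u} [Ring A] (M : ModuleCat.{u} A) (n : ℕ) : Prop :=
  ∀ i, n < i → ∀ N : ModuleCat.{u} A, Subsingleton (ext M N i)

/-- The projective dimension of `M`, as an element of `ℕ∞` (`⊤` if infinite). -/
noncomputable def projDim {A : Type u} [Ring A] (M : ModuleCat.{u} A) : ℕ∞ :=
  sInf {d : ℕ∞ | ∃ n : ℕ, d = n ∧ pdLE M n}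

/-- Membership in `𝒫`: finitely generated of finite projective dimension. -/
def InP {A : Type u} [Ring A] (M : ModuleCat.{u} A) : Prop :=
  Module.Finite A M ∧ ∃ n, pdLE M n

/-- The finitistic dimension of `A`. -/
noncomputable def findim (A : Type u) [Ring A] : ℕ∞ :=
  sSup {d : ℕ∞ | ∃ M : ModuleCat.{u} A, InP M ∧ d = projDim M}

/-- `M` is a direct summand of `S`. -/
def IsSummand {A : Type u} [Ring A] (M S : ModuleCat.{u} A) : Prop :=
  ∃ (s : M →ₗ[A] S) (r : S →ₗ[A] M), r ∘ₗ s = LinearMap.id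

/-- `M` belongs to `add 𝒳`: `M` is a direct summand of a finite direct sum of objects of `𝒳`. -/
def InAddOf {A : Type u} [Ring A] (X : ModuleCat.{u} A → Prop) (M : ModuleCat.{u} A) : Prop :=
  ∃ (k : ℕ) (F : Fin k → ModuleCat.{u} A), (∀ i, X (F i)) ∧
    IsSummand M (ModuleCat.of A (DirectSum (Fin k) (fun i => ↥(F i))))

/-- `M` belongs to `Add T`: `M` is a direct summand of an arbitrary direct sum of copies of `T`. -/
def InAdd {A : Type u} [Ring A] (T M : ModuleCat.{u} A) : Prop :=
  ∃ ι : Type u, IsSummand M (ModuleCat.of A (DirectSum ι (fun _ => ↥T)))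

/-- `M ∈ 𝒳^⊥`: `Ext^i(N, M) = 0` for all `N ∈ 𝒳` and `i > 0`. -/
def InPerpOf {A : Type u} [Ring A] (X : ModuleCat.{u} A → Prop) (M : ModuleCat.{u} A) : Prop :=
  ∀ N, X N → ExtVanish N M

/-- `M` is Ext-injective in `𝒫`: `M ∈ 𝒫` and `Ext^1(N, M) = 0` for all `N ∈ 𝒫`. -/
def ExtInjInP {A : Type u} [Ring A] (M : ModuleCat.{u} A) : Prop :=
  InP M ∧ ∀ N : ModuleCat.{u} A, InP N → Subsingleton (ext N M 1)

/-- `M` is splitting injective in `𝒳`: every injective map `M → Y` with `Y ∈ add 𝒳` splits. -/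
def SplittingInjIn {A : Type u} [Ring A] (X : ModuleCat.{u} A → Prop)
    (M : ModuleCat.{u} A) : Prop :=
  ∀ Y : ModuleCat.{u} A, InAddOf X Y → ∀ f : M →ₗ[A] Y, Function.Injective f →
    ∃ r : Y →ₗ[A] M, r ∘ₗ f = LinearMap.id

/-- `0 → M₁ → M₂ → M₃ → 0` is a short exact sequence. -/
def ShortExact {A : Type u} [Ring A] {M₁ M₂ M₃ : ModuleCat.{u} A}
    (f : M₁ →ₗ[A] M₂) (g : M₂ →ₗ[A] M₃) : Prop :=
  Function.Injective f ∧ Function.Exact f g ∧ Function.Surjective g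

/-- `f : XM → M` is a right `𝒳`-approximation of `M`. -/
def IsRightApprox {A : Type u} [Ring A] (X : ModuleCat.{u} A → Prop)
    {XM M : ModuleCat.{u} A} (f : XM →ₗ[A] M) : Prop :=
  X XM ∧ ∀ Y : ModuleCat.{u} A, X Y → ∀ g : Y →ₗ[A] M, ∃ h : Y →ₗ[A] XM, f ∘ₗ h = g

/-- `f : XM → M` is a minimal right `𝒳`-approximation. -/
def IsMinimalRightApprox {A : Type u} [Ring A] (X : ModuleCat.{u} A → Prop)
    {XM M : ModuleCat.{u} A} (f : XM →ₗ[A] M) : Prop :=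
  IsRightApprox X f ∧ ∀ g : XM →ₗ[A] XM, f ∘ₗ g = f → Function.Bijective g

/-- `𝒳` is contravariantly finite in `mod A`. -/
def ContravariantlyFinite {A : Type u} [Ring A] (X : ModuleCat.{u} A → Prop) : Prop :=
  ∀ M : ModuleCat.{u} A, Module.Finite A M →
    ∃ (XM : ModuleCat.{u} A) (f : XM →ₗ[A] M), IsRightApprox X f

/-- `M` is an indecomposable module: nonzero, and its only idempotent endomorphisms
are `0` and the identity. -/
def Indec {A : Type u} [Ring A] (M : ModuleCat.{u} A) : Prop :=
  (¬ Subsingleton M) ∧ ∀ e : M →ₗ[A] M, e ∘ₗ e = e → e = 0 ∨ e = LinearMap.id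

/-- `L` admits a finite coresolution `0 → L → C^0 → ⋯ → C^n → 0` with all `C^i ∈ add T`. -/
def HasAddCoresolution {A : Type u} [Ring A] (T L : ModuleCat.{u} A) : Prop :=
  ∃ (C : ℕ → ModuleCat.{u} A) (d : ∀ i, C i →ₗ[A] C (i+1)) (f : L →ₗ[A] C 0),
    Function.Injective f ∧ Function.Exact f (d 0) ∧
    (∀ i, Function.Exact (d i) (d (i+1))) ∧
    (∀ i, InAddOf (fun X => X = T) (C i)) ∧
    (∃ m, ∀ i, m ≤ i → Subsingleton (C i))

/-- `T` is a tilting `A`-module. -/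
def IsTilting {A : Type u} [Ring A] (T : ModuleCat.{u} A) : Prop :=
  Module.Finite A T ∧ (∃ n, pdLE T n) ∧ ExtVanish T T ∧
    HasAddCoresolution T (ModuleCat.of A A)

/-- `𝒳` is a resolving subcategory of `mod A`. -/
def Resolving {A : Type u} [Ring A] (X : ModuleCat.{u} A → Prop) : Prop :=
  (∀ M : ModuleCat.{u} A, Module.Finite A M → Module.Projective A M → X M) ∧
  (∀ (M₁ M₂ M₃ : ModuleCat.{u} A) (f : M₁ →ₗ[A] M₂) (g : M₂ →ₗ[A] M₃),
      ShortExact f g → X M₁ → X M₃ → X M₂) ∧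
  (∀ (M₁ M₂ M₃ : ModuleCat.{u} A) (f : M₁ →ₗ[A] M₂) (g : M₂ →ₗ[A] M₃),
      ShortExact f g → X M₂ → X M₃ → X M₁)

/-- `F` is a complete irredundant family of representatives of the isomorphism classes of
indecomposable Ext-injective modules in `𝒫`. -/
def IsCompleteExtInjFamily {A : Type u} [Ring A] {ι : Type u}
    (F : ι → ModuleCat.{u} A) : Prop :=
  (∀ i, Indec (F i) ∧ ExtInjInP (F i)) ∧
  (∀ M : ModuleCat.{u} A, Indec M → ExtInjInP M → ∃ i, Nonempty (M ≃ₗ[A] F i)) ∧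
  (∀ i j, Nonempty (F i ≃ₗ[A] F j) → i = j)

/-- `I` is a complete set of pairwise non-isomorphic indecomposable injective modules. -/
def IsCompleteIndecInjFamily {A : Type u} [Ring A] {n : ℕ}
    (I : Fin n → ModuleCat.{u} A) : Prop :=
  (∀ j, Module.Finite A (I j) ∧ Module.Injective A (I j) ∧ Indec (I j)) ∧
  (∀ M : ModuleCat.{u} A, Module.Finite A M → Module.Injective A M → Indec M →
      ∃ j, Nonempty (M ≃ₗ[A] I j)) ∧
  (∀ j k, Nonempty (I j ≃ₗ[A] I k) → j = k)

variable {A : Type u} [Ring A]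

/-- The two constructions of `Ext` in Mathlib vanish simultaneously. -/
theorem subsingleton_ext_iff (M N : ModuleCat.{u} A) (n : ℕ) :
    Subsingleton (ext M N (n + 1)) ↔ Subsingleton (Abelian.Ext.{u} M N (n + 1)) := by
  let P := ProjectiveResolution.of M
  trans ∀ f : P.complex.X (n + 1) ⟶ N, P.complex.d (n + 1 + 1) (n + 1) ≫ f = 0 →
      ∃ g : P.complex.X n ⟶ N, P.complex.d (n + 1) n ≫ g = f
  · have e := (P.isoExt (R := ℤ) (n + 1) N)
    rw [← ModuleCat.isZero_iff_subsingleton, e.isZero_iff,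
      ← HomologicalComplex.exactAt_iff_isZero_homology,
      HomologicalComplex.exactAt_iff' _ n (n+1) (n+1+1) (by simp) (by simp),
      ShortComplex.moduleCat_exact_iff]
    rfl
  · rw [subsingleton_iff_forall_eq 0]
    constructor
    · intro h y
      obtain ⟨f, hf, rfl⟩ := P.extMk_surjective y (n + 1 + 1) rfl
      exact (P.extMk_eq_zero_iff f _ rfl hf n rfl).2 (h f hf)
    · intro h f hf
      exact (P.extMk_eq_zero_iff f _ rfl hf n rfl).1 (h _)

theorem ShortExact.toShortComplex {M₁ M₂ M₃ : ModuleCat.{u} A} {f : M₁ →ₗ[A] M₂}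
    {g : M₂ →ₗ[A] M₃} (h : ShortExact f g) :
    (ShortComplex.mk (ModuleCat.ofHom f) (ModuleCat.ofHom g)
      (by ext x; exact h.2.1.apply_apply_eq_zero x)).ShortExact where
  exact := by
    rw [ShortComplex.ShortExact.moduleCat_exact_iff_function_exact]
    exact h.2.1
  mono_f := (ModuleCat.mono_iff_injective _).2 h.1
  epi_g := (ModuleCat.epi_iff_surjective _).2 h.2.2

section LongExactSequences

variable {M M₁ M₂ M₃ N : ModuleCat.{u} A} {f : M₁ →ₗ[A] M₂} {g : M₂ →ₗ[A] M₃} {n : ℕ}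

theorem ext_cov_mid (h : ShortExact f g) (h₁ : Subsingleton (ext M M₁ (n + 1)))
    (h₃ : Subsingleton (ext M M₃ (n + 1))) : Subsingleton (ext M M₂ (n + 1)) := by
  rw [subsingleton_ext_iff] at *
  refine subsingleton_of_forall_eq 0 fun y ↦ ?_
  obtain ⟨x, rfl⟩ := Abelian.Ext.covariant_sequence_exact₂ M h.toShortComplex y
    (@Subsingleton.elim _ h₃ _ _)
  rw [@Subsingleton.elim _ h₁ x 0]
  simp

theorem ext_cov_right (h : ShortExact f g) (h₂ : Subsingleton (ext M M₂ (n + 1)))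
    (h₁ : Subsingleton (ext M M₁ (n + 2))) : Subsingleton (ext M M₃ (n + 1)) := by
  rw [subsingleton_ext_iff] at *
  refine subsingleton_of_forall_eq 0 fun y ↦ ?_
  obtain ⟨x, rfl⟩ := Abelian.Ext.covariant_sequence_exact₃ M h.toShortComplex y rfl
    (@Subsingleton.elim _ h₁ _ _)
  rw [@Subsingleton.elim _ h₂ x 0]
  simp

theorem ext_cov_left (h : ShortExact f g) (h₃ : Subsingleton (ext M M₃ (n + 1)))
    (h₂ : Subsingleton (ext M M₂ (n + 2))) : Subsingleton (ext M M₁ (n + 2)) := by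
  rw [subsingleton_ext_iff] at *
  refine subsingleton_of_forall_eq 0 fun y ↦ ?_
  obtain ⟨x, rfl⟩ := Abelian.Ext.covariant_sequence_exact₁ M h.toShortComplex y
    (@Subsingleton.elim _ h₂ _ _) rfl
  rw [@Subsingleton.elim _ h₃ x 0]
  simp

theorem ext_one_left_of_lift (h : ShortExact f g)
    (h₃ : ∀ φ : M →ₗ[A] M₃, ∃ ψ : M →ₗ[A] M₂, g ∘ₗ ψ = φ)
    (h₂ : Subsingleton (ext M M₂ 1)) : Subsingleton (ext M M₁ 1) := by
  rw [subsingleton_ext_iff _ _ 0] at *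
  refine subsingleton_of_forall_eq 0 fun y ↦ ?_
  obtain ⟨x, rfl⟩ := Abelian.Ext.covariant_sequence_exact₁ M h.toShortComplex y
    (@Subsingleton.elim _ h₂ _ _) rfl
  obtain ⟨φ, rfl⟩ := Abelian.Ext.mk₀_bijective _ _ |>.2 x
  obtain ⟨ψ, hψ⟩ := h₃ φ.hom
  have : φ = ModuleCat.ofHom ψ ≫ ModuleCat.ofHom g := by
    ext x; exact (LinearMap.congr_fun hψ x).symm
  rw [this, ← Abelian.Ext.mk₀_comp_mk₀]
  have := h.toShortComplex.comp_extClass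
  dsimp at this ⊢
  rw [Abelian.Ext.comp_assoc_of_second_deg_zero, this, Abelian.Ext.comp_zero]

theorem exists_lift_of_ext_one (h : ShortExact f g) (h₁ : Subsingleton (ext M M₁ 1))
    (φ : M →ₗ[A] M₃) : ∃ ψ : M →ₗ[A] M₂, g ∘ₗ ψ = φ := by
  rw [subsingleton_ext_iff _ _ 0] at h₁
  obtain ⟨x, hx⟩ := Abelian.Ext.covariant_sequence_exact₃ M h.toShortComplex
    (Abelian.Ext.mk₀ (ModuleCat.ofHom φ)) (zero_add 1) (@Subsingleton.elim _ h₁ _ _)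
  obtain ⟨ψ, rfl⟩ := Abelian.Ext.mk₀_bijective _ _ |>.2 x
  rw [Abelian.Ext.mk₀_comp_mk₀] at hx
  have := (Abelian.Ext.mk₀_bijective _ _).1 hx
  exact ⟨ψ.hom, congrArg ModuleCat.Hom.hom this⟩

theorem ext_contra_mid (h : ShortExact f g) (h₁ : Subsingleton (ext M₁ N (n + 1)))
    (h₃ : Subsingleton (ext M₃ N (n + 1))) : Subsingleton (ext M₂ N (n + 1)) := by
  rw [subsingleton_ext_iff] at *
  refine subsingleton_of_forall_eq 0 fun y ↦ ?_
  obtain ⟨x, rfl⟩ := Abelian.Ext.contravariant_sequence_exact₂ h.toShortComplex N y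
    (@Subsingleton.elim _ h₁ _ _)
  rw [@Subsingleton.elim _ h₃ x 0]
  simp

theorem ext_contra_left (h : ShortExact f g) (h₂ : Subsingleton (ext M₂ N (n + 1)))
    (h₃ : Subsingleton (ext M₃ N (n + 2))) : Subsingleton (ext M₁ N (n + 1)) := by
  rw [subsingleton_ext_iff] at *
  refine subsingleton_of_forall_eq 0 fun y ↦ ?_
  obtain ⟨x, rfl⟩ := Abelian.Ext.contravariant_sequence_exact₁ h.toShortComplex N y
    (add_comm 1 (n + 1)) (@Subsingleton.elim _ h₃ _ _)
  rw [@Subsingleton.elim _ h₂ x 0]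
  simp

theorem ext_contra_right (h : ShortExact f g) (h₁ : Subsingleton (ext M₁ N (n + 1)))
    (h₂ : Subsingleton (ext M₂ N (n + 2))) : Subsingleton (ext M₃ N (n + 2)) := by
  rw [subsingleton_ext_iff] at *
  refine subsingleton_of_forall_eq 0 fun y ↦ ?_
  obtain ⟨x, rfl⟩ := Abelian.Ext.contravariant_sequence_exact₃ h.toShortComplex N y
    (@Subsingleton.elim _ h₂ _ _) (add_comm 1 (n + 1))
  rw [@Subsingleton.elim _ h₁ x 0]
  simp

theorem ext_one_right_of_extend (h : ShortExact f g)
    (h₁ : ∀ φ : M₁ →ₗ[A] N, ∃ ψ : M₂ →ₗ[A] N, ψ ∘ₗ f = φ)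
    (h₂ : Subsingleton (ext M₂ N 1)) : Subsingleton (ext M₃ N 1) := by
  rw [subsingleton_ext_iff _ _ 0] at *
  refine subsingleton_of_forall_eq 0 fun y ↦ ?_
  obtain ⟨x, rfl⟩ := Abelian.Ext.contravariant_sequence_exact₃ h.toShortComplex N y
    (@Subsingleton.elim _ h₂ _ _) (add_comm 1 0)
  obtain ⟨φ, rfl⟩ := Abelian.Ext.mk₀_bijective _ _ |>.2 x
  obtain ⟨ψ, hψ⟩ := h₁ φ.hom
  have : φ = ModuleCat.ofHom f ≫ ModuleCat.ofHom ψ := by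
    ext x; exact (LinearMap.congr_fun hψ x).symm
  rw [this, ← Abelian.Ext.mk₀_comp_mk₀]
  have := h.toShortComplex.extClass_comp
  dsimp at this ⊢
  rw [← Abelian.Ext.comp_assoc_of_second_deg_zero, this, Abelian.Ext.zero_comp]

theorem exists_extend_of_ext_one (h : ShortExact f g) (h₃ : Subsingleton (ext M₃ N 1))
    (φ : M₁ →ₗ[A] N) : ∃ ψ : M₂ →ₗ[A] N, ψ ∘ₗ f = φ := by
  rw [subsingleton_ext_iff _ _ 0] at h₃
  obtain ⟨x, hx⟩ := Abelian.Ext.contravariant_sequence_exact₁ h.toShortComplex N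
    (Abelian.Ext.mk₀ (ModuleCat.ofHom φ)) (add_zero 1) (@Subsingleton.elim _ h₃ _ _)
  obtain ⟨ψ, rfl⟩ := Abelian.Ext.mk₀_bijective _ _ |>.2 x
  rw [Abelian.Ext.mk₀_comp_mk₀] at hx
  have := (Abelian.Ext.mk₀_bijective _ _).1 hx
  exact ⟨ψ.hom, congrArg ModuleCat.Hom.hom this⟩

theorem subsingleton_ext_of_isSummand_left {S : ModuleCat.{u} A} (h : IsSummand M S)
    (hS : Subsingleton (ext S N (n + 1))) : Subsingleton (ext M N (n + 1)) := by
  rw [subsingleton_ext_iff] at *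
  obtain ⟨s, r, hsr⟩ := h
  refine subsingleton_of_forall_eq 0 fun y ↦ ?_
  have h₁ : ModuleCat.ofHom s ≫ ModuleCat.ofHom r = 𝟙 M := by
    ext x; exact LinearMap.congr_fun hsr x
  rw [← Abelian.Ext.mk₀_id_comp y, ← h₁, ← Abelian.Ext.mk₀_comp_mk₀,
    Abelian.Ext.comp_assoc_of_second_deg_zero,
    @Subsingleton.elim _ hS ((Abelian.Ext.mk₀ (ModuleCat.ofHom r)).comp y _) 0,
    Abelian.Ext.comp_zero]

theorem subsingleton_ext_of_isSummand_right {S : ModuleCat.{u} A} (h : IsSummand N S)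
    (hS : Subsingleton (ext M S (n + 1))) : Subsingleton (ext M N (n + 1)) := by
  rw [subsingleton_ext_iff] at *
  obtain ⟨s, r, hsr⟩ := h
  refine subsingleton_of_forall_eq 0 fun y ↦ ?_
  have h₁ : ModuleCat.ofHom s ≫ ModuleCat.ofHom r = 𝟙 N := by
    ext x; exact LinearMap.congr_fun hsr x
  rw [← Abelian.Ext.comp_mk₀_id y, ← h₁, ← Abelian.Ext.mk₀_comp_mk₀,
    ← Abelian.Ext.comp_assoc_of_second_deg_zero,
    @Subsingleton.elim _ hS (y.comp (Abelian.Ext.mk₀ (ModuleCat.ofHom s)) _) 0,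
    Abelian.Ext.zero_comp]

theorem subsingleton_ext_of_projective (hM : Module.Projective A M) (i : ℕ) (hi : 0 < i) :
    Subsingleton (ext M N i) := by
  obtain ⟨n, rfl⟩ := Nat.exists_eq_succ_of_ne_zero hi.ne'
  have : Projective M := (IsProjective.iff_projective (R := A) (P := M)).1 hM
  rw [subsingleton_ext_iff]
  exact Abelian.Ext.subsingleton_of_projective _ _ _

theorem subsingleton_ext_of_injective (hN : Module.Injective A N) (i : ℕ) (hi : 0 < i) :
    Subsingleton (ext M N i) := by
  obtain ⟨n, rfl⟩ := Nat.exists_eq_succ_of_ne_zero hi.ne'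
  have : Injective N := Module.injective_object_of_injective_module A N
  rw [subsingleton_ext_iff]
  exact Abelian.Ext.subsingleton_of_injective _ _ _

end LongExactSequences

/-- A submodule of an injective module is contained in an injective essential extension of it. -/
theorem exists_injective_essential_extension {R Q : Type u} [Ring R] [AddCommGroup Q] [Module R Q]
    (hQ : Module.Injective R Q) (N : Submodule R Q) :
    ∃ E : Submodule R Q, N ≤ E ∧ (∀ L ≤ E, L ⊓ N = ⊥ → L = ⊥) ∧ Module.Injective R E := by
  obtain ⟨E, hNE, hE⟩ := zorn_le_nonempty₀
    {E : Submodule R Q | N ≤ E ∧ ∀ L ≤ E, L ⊓ N = ⊥ → L = ⊥} (by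
      intro c hc hchain y hy
      refine ⟨sSup c, ⟨(hc hy).1.trans (le_sSup hy), fun L hL hLN ↦ ?_⟩, fun z hz ↦ le_sSup hz⟩
      rw [Submodule.eq_bot_iff]
      intro x hx
      obtain ⟨E, hEc, hxE⟩ := (Submodule.mem_sSup_of_directed ⟨y, hy⟩ hchain.directedOn).1 (hL hx)
      have h₁ : Submodule.span R {x} ≤ E := by simpa using hxE
      have h₂ : Submodule.span R {x} ≤ L := by simpa using hx
      have := (hc hEc).2 _ h₁ (le_bot_iff.1 (hLN ▸ inf_le_inf_right N h₂))
      simpa using this) N ⟨le_rfl, fun L hL h ↦ by rwa [inf_eq_left.2 hL] at h⟩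
  obtain ⟨C, -, hC⟩ := zorn_le_nonempty₀ {C : Submodule R Q | C ⊓ E = ⊥} (by
      intro c hc hchain y hy
      refine ⟨sSup c, ?_, fun z hz ↦ le_sSup hz⟩
      change sSup c ⊓ E = ⊥
      rw [Submodule.eq_bot_iff]
      rintro x ⟨hx, hxE⟩
      obtain ⟨D, hDc, hxD⟩ := (Submodule.mem_sSup_of_directed ⟨y, hy⟩ hchain.directedOn).1 hx
      have : x ∈ D ⊓ E := ⟨hxD, hxE⟩
      rw [hc hDc] at this
      simpa using this) ⊥ (by simp)
  have hCE : C ⊓ E = ⊥ := hC.prop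
  have hinj : Function.Injective (C.mkQ ∘ₗ E.subtype) := by
    rw [← LinearMap.ker_eq_bot, Submodule.eq_bot_iff]
    intro x hx
    have : (x : Q) ∈ C ⊓ E := ⟨by simpa using hx, x.2⟩
    rw [hCE] at this
    exact Subtype.ext (by simpa using this)
  obtain ⟨h, hh⟩ := hQ.out _ hinj E.subtype
  have hhE : ∀ x ∈ E, h (C.mkQ x) = x := fun x hx ↦ hh ⟨x, hx⟩
  have hker : ∀ K : Submodule R Q, C ≤ K → K ⊓ E = ⊥ → K = C := fun K h₁ h₂ ↦
    le_antisymm (hC.le_of_ge h₂ h₁) h₁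
  have hEess := hE.prop.2
  have hrange : LinearMap.range h ≤ E := by
    refine hE.le_of_ge ⟨hNE.trans fun x hx ↦ ⟨C.mkQ x, hhE x hx⟩, fun L hL hLN ↦ ?_⟩
      fun x hx ↦ ⟨C.mkQ x, hhE x hx⟩
    have h₁ : L ⊓ E = ⊥ := hEess _ inf_le_right (by
      rw [inf_assoc, inf_eq_right.2 hNE, hLN])
    have h₂ := hker (L.comap (h ∘ₗ C.mkQ)) (fun x hx ↦ by
      have : C.mkQ x = 0 := by simpa using hx
      simp only [Submodule.mem_comap, LinearMap.comp_apply, this, map_zero, L.zero_mem]) (by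
        rw [Submodule.eq_bot_iff]
        rintro x ⟨hx, hxE⟩
        have : x ∈ L ⊓ E := ⟨by
          have h₃ : h (C.mkQ x) ∈ L := hx
          rwa [hhE x hxE] at h₃, hxE⟩
        rw [h₁] at this
        simpa using this)
    rw [Submodule.eq_bot_iff]
    intro x hx
    obtain ⟨q, rfl⟩ := hL hx
    obtain ⟨q, rfl⟩ := C.mkQ_surjective q
    have : q ∈ C := by rw [← h₂]; exact hx
    have : C.mkQ q = 0 := by simpa using this
    rw [this, map_zero]
  refine ⟨E, hNE, hEess, ⟨fun X Y _ _ _ _ f hf g ↦ ?_⟩⟩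
  obtain ⟨k, hk⟩ := hQ.out f hf (E.subtype ∘ₗ g)
  refine ⟨(h ∘ₗ C.mkQ ∘ₗ k).codRestrict E fun x ↦ hrange ⟨_, rfl⟩, fun x ↦ Subtype.ext ?_⟩
  have := hk x
  simp only [LinearMap.codRestrict_apply, LinearMap.comp_apply, this]
  exact hhE _ (g x).2

/-- Over a commutative artinian ring, an essential extension of a finitely generated module has
Noetherian modules of homomorphisms from modules of finite length. -/
theorem isNoetherian_hom_of_essential {R Q : Type u} [CommRing R] [IsNoetherianRing R]
    [AddCommGroup Q] [Module R Q] (N : Submodule R Q)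
    [Module.Finite R N] (hN : ∀ L : Submodule R Q, L ⊓ N = ⊥ → L = ⊥) {X : Type u}
    [AddCommGroup X] [Module R X] (hX : IsFiniteLength R X) : IsNoetherian R (X →ₗ[R] Q) := by
  induction hX with
  | of_subsingleton => infer_instance
  | @of_simple_quotient M _ _ K hK _ ih =>
    have hsimple : IsNoetherian R ((M ⧸ K) →ₗ[R] Q) := by
      have : Module.Finite R (M ⧸ K) := inferInstance
      refine isNoetherian_of_surjective
        (LinearMap.compRight R (M := M ⧸ K) N.subtype) (LinearMap.range_eq_top.2 fun φ ↦ ?_)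
      have hφ : LinearMap.range φ ≤ N := by
        by_contra hcon
        have h₁ : N.comap φ = ⊥ := (eq_bot_or_eq_top (N.comap φ)).resolve_right fun h ↦
          hcon (LinearMap.range_le_iff_comap.2 h)
        have h₂ : LinearMap.range φ = ⊥ := hN _ (by
          rw [Submodule.eq_bot_iff]
          rintro _ ⟨⟨x, rfl⟩, hx⟩
          have : x ∈ N.comap φ := hx
          rw [h₁, Submodule.mem_bot] at this
          rw [this, map_zero])
        exact hcon (h₂ ▸ bot_le)
      exact ⟨φ.codRestrict N fun x ↦ hφ ⟨x, rfl⟩, rfl⟩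
    refine isNoetherian_of_range_eq_ker (LinearMap.lcomp R Q K.mkQ) (LinearMap.lcomp R Q K.subtype)
      (le_antisymm ?_ fun φ hφ ↦ ?_)
    · rintro _ ⟨φ, rfl⟩
      ext x
      exact (congrArg φ ((Submodule.Quotient.mk_eq_zero K).2 x.2)).trans (map_zero φ)
    · refine ⟨K.liftQ φ fun x hx ↦ LinearMap.congr_fun hφ ⟨x, hx⟩, ?_⟩
      ext x
      rfl

/-- Over a commutative artinian ring, finitely generated modules embed in finitely generated
injective modules. -/
theorem exists_finite_injective_embedding_comm (R : Type u) [CommRing R] [IsArtinianRing R]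
    (M : ModuleCat.{u} R) [Module.Finite R M] :
    ∃ (I : ModuleCat.{u} R) (f : M ⟶ I),
      Module.Finite R I ∧ Injective I ∧ Function.Injective f.hom := by
  let Q := Injective.under M
  have hQ : Module.Injective R Q := Module.injective_module_of_injective_object R Q
    (inj := (inferInstance : Injective (Injective.under M)))
  let i : M →ₗ[R] Q := (Injective.ι M).hom
  have hi : Function.Injective i := (ModuleCat.mono_iff_injective (Injective.ι M)).1 inferInstance
  obtain ⟨E, hNE, hess, hE⟩ := exists_injective_essential_extension hQ (LinearMap.range i)
  let N : Submodule R E := (LinearMap.range i).comap E.subtype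
  have : Module.Finite R N := by
    have : Module.Finite R (LinearMap.range i) := inferInstance
    exact Module.Finite.equiv (Submodule.comapSubtypeEquivOfLe hNE).symm
  have hfin : IsNoetherian R (R →ₗ[R] E) := isNoetherian_hom_of_essential N
    (fun L hL ↦ by
      have := hess (L.map E.subtype) (Submodule.map_subtype_le _ _) (by
        rw [Submodule.eq_bot_iff]
        rintro _ ⟨⟨x, hx, rfl⟩, hxN⟩
        have : x ∈ L ⊓ N := ⟨hx, hxN⟩
        rw [hL, Submodule.mem_bot] at this
        rw [this, map_zero])
      exact (Submodule.map_injective_of_injective E.injective_subtype) (by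
        rw [this, Submodule.map_bot]))
    (isFiniteLength_iff_isNoetherian_isArtinian.2 ⟨inferInstance, inferInstance⟩)
  have hfin' : IsNoetherian R E := isNoetherian_of_linearEquiv (LinearMap.ringLmapEquivSelf R R E)
  refine ⟨ModuleCat.of R E, ModuleCat.ofHom (i.codRestrict E fun x ↦ hNE ⟨x, rfl⟩), ?_, ?_, ?_⟩
  · exact (inferInstance : Module.Finite R E)
  · exact Module.injective_object_of_injective_module R E
  · intro x y hxy
    exact hi (congrArg Subtype.val hxy)

/-- Over an artin algebra, finitely generated modules embed in finitely generated
injective modules. -/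
theorem exists_finite_injective_embedding (R : Type u) [CommRing R] [IsArtinianRing R]
    {A : Type u} [Ring A] [Algebra R A] [Module.Finite R A]
    (M : ModuleCat.{u} A) (hM : Module.Finite A M) :
    ∃ (I : ModuleCat.{u} A) (f : M →ₗ[A] I),
      Module.Finite A I ∧ Module.Injective A I ∧ Function.Injective f := by
  let α := algebraMap R A
  have hM' : Module.Finite R ((ModuleCat.restrictScalars α).obj M) := by
    let _ : Module R M := Module.compHom M α
    have : IsScalarTower R A M := ⟨fun r a m ↦ by
      rw [Algebra.smul_def, mul_smul]; rfl⟩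
    have h : Module.Finite R M := Module.Finite.trans (R := R) A M
    exact h
  obtain ⟨E, j, hE, hEinj, hj⟩ :=
    exists_finite_injective_embedding_comm R ((ModuleCat.restrictScalars α).obj M)
  let I := (ModuleCat.coextendScalars α).obj E
  let F : M ⟶ I := ModuleCat.RestrictionCoextensionAdj.HomEquiv.fromRestriction α j
  refine ⟨I, F.hom, ?_, ?_, ?_⟩
  · let _ : Module R I := Module.compHom I α
    have : IsScalarTower R A I := ⟨fun r a m ↦ by
      rw [Algebra.smul_def, mul_smul]; rfl⟩
    have hA : Module.Finite R ((ModuleCat.restrictScalars α).obj (ModuleCat.of A A)) :=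
      Module.Finite.of_surjective (M := A) (σ := RingHom.id R)
        { toFun := fun a ↦ (a : A)
          map_add' := fun _ _ ↦ rfl
          map_smul' := fun r a ↦ Algebra.smul_def r a } fun a ↦ ⟨a, rfl⟩
    have : IsNoetherian R I := by
      let e : I →ₗ[R] ((ModuleCat.restrictScalars α).obj (ModuleCat.of A A) →ₗ[R] E) :=
        { toFun := fun φ ↦ ModuleCat.CoextendScalars.equiv α E φ
          map_add' := fun _ _ ↦ rfl
          map_smul' := fun r φ ↦ by
            refine LinearMap.ext fun (s : A) ↦ ?_
            exact (congrArg (ModuleCat.CoextendScalars.equiv α E φ)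
              (Algebra.commutes r s).symm).trans
                ((ModuleCat.CoextendScalars.equiv α E φ).map_smul r s) }
      exact isNoetherian_of_injective e (ModuleCat.CoextendScalars.equiv α E).injective
    exact Module.Finite.of_restrictScalars_finite R A I
  · exact Module.injective_module_of_injective_object A I
      (inj := Injective.injective_of_adjoint (ModuleCat.restrictCoextendScalarsAdj α) E)
  · intro x y hxy
    have key : ∀ z : M, ModuleCat.CoextendScalars.equiv α E (F.hom z) (1 : A) = j.hom z :=
      fun z ↦ (ModuleCat.RestrictionCoextensionAdj.HomEquiv.fromRestriction_hom_apply_apply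
        α j z (1 : A)).trans (congrArg j.hom (one_smul A z))
    exact hj (by rw [← key, ← key, hxy])

section Constructions

variable {A : Type u} [Ring A] {M₁ M₂ M₃ : ModuleCat.{u} A}

theorem shortExact_ker {g : M₂ →ₗ[A] M₃} (hg : Function.Surjective g) :
    ShortExact (M₁ := ModuleCat.of A (LinearMap.ker g)) (LinearMap.ker g).subtype g :=
  ⟨Subtype.val_injective, fun x ↦ by simp, hg⟩

theorem shortExact_mkQ {f : M₁ →ₗ[A] M₂} (hf : Function.Injective f) :
    ShortExact (M₃ := ModuleCat.of A (M₂ ⧸ LinearMap.range f)) f (LinearMap.range f).mkQ :=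
  ⟨hf, fun x ↦ by simp, Submodule.mkQ_surjective _⟩

theorem shortExact_prod (M N : ModuleCat.{u} A) :
    ShortExact (M₂ := ModuleCat.of A (M × N)) (LinearMap.inl A M N) (LinearMap.snd A M N) :=
  ⟨LinearMap.inl_injective, .inl_snd, LinearMap.snd_surjective⟩

/-- The pullback of an epimorphism with kernel `Y` along an epimorphism with kernel `M`. -/
theorem ShortExact.exists_pullback {M I C Y X : ModuleCat.{u} A} {f : M →ₗ[A] I} {g : I →ₗ[A] C}
    {a : Y →ₗ[A] X} {b : X →ₗ[A] C} (h : ShortExact f g) (h' : ShortExact a b) :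
    ∃ (E : ModuleCat.{u} A) (f' : M →ₗ[A] E) (g' : E →ₗ[A] X) (a' : Y →ₗ[A] E) (b' : E →ₗ[A] I),
      ShortExact f' g' ∧ ShortExact a' b' := by
  let E : Submodule A (I × X) := LinearMap.eqLocus (g ∘ₗ LinearMap.fst A I X)
    (b ∘ₗ LinearMap.snd A I X)
  refine ⟨ModuleCat.of A E,
    (LinearMap.inl A I X ∘ₗ f).codRestrict E fun x ↦ ?_, LinearMap.snd A I X ∘ₗ E.subtype,
    (LinearMap.inr A I X ∘ₗ a).codRestrict E fun x ↦ ?_, LinearMap.fst A I X ∘ₗ E.subtype,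
    ⟨fun x y hxy ↦ ?_, ?_, fun x ↦ ?_⟩, ⟨fun x y hxy ↦ ?_, ?_, fun x ↦ ?_⟩⟩
  · change g (f x) = b 0
    rw [h.2.1.apply_apply_eq_zero, map_zero]
  · change g 0 = b (a x)
    rw [h'.2.1.apply_apply_eq_zero, map_zero]
  · exact h.1 (congrArg (fun e : E ↦ e.1.1) hxy)
  · rintro ⟨⟨i, x⟩, hix⟩
    constructor
    · rintro rfl
      have : g i = b 0 := hix
      rw [map_zero] at this
      obtain ⟨m, rfl⟩ := (h.2.1 i).1 this
      exact ⟨m, rfl⟩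
    · rintro ⟨m, hm⟩
      exact (congrArg (fun e : E ↦ e.1.2) hm).symm
  · obtain ⟨i, hi⟩ := h.2.2 (b x)
    exact ⟨⟨(i, x), hi⟩, rfl⟩
  · exact h'.1 (congrArg (fun e : E ↦ e.1.2) hxy)
  · rintro ⟨⟨i, x⟩, hix⟩
    constructor
    · rintro rfl
      have : g 0 = b x := hix
      rw [map_zero] at this
      obtain ⟨m, rfl⟩ := (h'.2.1 x).1 this.symm
      exact ⟨m, rfl⟩
    · rintro ⟨m, hm⟩
      exact (congrArg (fun e : E ↦ e.1.1) hm).symm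
  · obtain ⟨i, hi⟩ := h'.2.2 (g x)
    exact ⟨⟨(x, i), hi.symm⟩, rfl⟩

/-- The kernel of a composition of two epimorphisms is an extension of their kernels. -/
theorem ShortExact.exists_ker_comp {M E W Y T : ModuleCat.{u} A} {f : M →ₗ[A] E} {g : E →ₗ[A] W}
    {a : Y →ₗ[A] T} {b : T →ₗ[A] E} (h : ShortExact f g) (h' : ShortExact a b) :
    ∃ (Z : ModuleCat.{u} A) (a' : Y →ₗ[A] Z) (b' : Z →ₗ[A] M) (i : Z →ₗ[A] T),
      ShortExact a' b' ∧ ShortExact i (g ∘ₗ b) := by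
  let Z := LinearMap.ker (g ∘ₗ b)
  have hZ : ∀ z : Z, ∃ m, f m = b z := fun z ↦ (h.2.1 _).1 z.2
  choose m hm using hZ
  refine ⟨ModuleCat.of A Z, a.codRestrict Z fun x ↦ ?_,
    { toFun := m, map_add' := fun x y ↦ h.1 ?_, map_smul' := fun r x ↦ h.1 ?_ }, Z.subtype,
    ⟨fun x y hxy ↦ h'.1 (congrArg Subtype.val hxy), fun z ↦ ?_, fun x ↦ ?_⟩,
    shortExact_ker (h.2.2.comp h'.2.2)⟩
  · change g (b (a x)) = 0
    rw [h'.2.1.apply_apply_eq_zero, map_zero]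
  · simp [hm]
  · simp [hm]
  · have h₁ : m z = 0 ↔ b z = 0 := by
      rw [← hm, ← map_zero f, h.1.eq_iff]
    refine h₁.trans ((h'.2.1 _).trans ⟨?_, ?_⟩)
    · rintro ⟨y, hy⟩
      exact ⟨y, Subtype.ext hy⟩
    · rintro ⟨y, rfl⟩
      exact ⟨y, rfl⟩
  · obtain ⟨t, ht⟩ := h'.2.2 (f x)
    refine ⟨⟨t, ?_⟩, h.1 ?_⟩
    · change g (b t) = 0
      rw [ht, h.2.1.apply_apply_eq_zero]
    · exact (hm _).trans ht

/-- The pushout of a monomorphism along an arbitrary map, with its universal property. -/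
theorem ShortExact.exists_pushout {K P X N : ModuleCat.{u} A} {i : K →ₗ[A] P} {p : P →ₗ[A] X}
    (h : ShortExact i p) (k : K →ₗ[A] N) :
    ∃ (Z : ModuleCat.{u} A) (n : N →ₗ[A] Z) (q : P →ₗ[A] Z) (z : Z →ₗ[A] X),
      ShortExact n z ∧ n ∘ₗ k = q ∘ₗ i ∧ z ∘ₗ q = p ∧
      ∀ (W : ModuleCat.{u} A) (a : N →ₗ[A] W) (b : P →ₗ[A] W), a ∘ₗ k = b ∘ₗ i →
        ∃ c : Z →ₗ[A] W, c ∘ₗ n = a ∧ c ∘ₗ q = b := by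
  let D : Submodule A (N × P) := LinearMap.range (k.prod (-i))
  have hD : ∀ y, (k y, -i y) ∈ D := fun y ↦ ⟨y, rfl⟩
  have hz : D ≤ LinearMap.ker (p ∘ₗ LinearMap.snd A N P) := by
    rintro _ ⟨y, rfl⟩
    simp [h.2.1.apply_apply_eq_zero]
  refine ⟨ModuleCat.of A ((N × P) ⧸ D), D.mkQ ∘ₗ LinearMap.inl A N P,
    D.mkQ ∘ₗ LinearMap.inr A N P, D.liftQ (p ∘ₗ LinearMap.snd A N P) hz,
    ⟨?_, fun z ↦ ?_, fun x ↦ ?_⟩, ?_, ?_, fun W a b hab ↦ ?_⟩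
  · rw [← LinearMap.ker_eq_bot, Submodule.eq_bot_iff]
    intro x hx
    have : (x, 0) ∈ D := (Submodule.Quotient.mk_eq_zero D).1 hx
    obtain ⟨y, hy⟩ := this
    obtain ⟨rfl, hy⟩ := Prod.ext_iff.1 hy
    have : i y = 0 := by simpa using hy
    have : y = 0 := h.1 (this.trans (map_zero i).symm)
    simp [this]
  · obtain ⟨⟨x, y⟩, rfl⟩ := D.mkQ_surjective z
    constructor
    · intro hxy
      obtain ⟨w, rfl⟩ := (h.2.1 y).1 hxy
      refine ⟨x + k w, (Submodule.Quotient.eq D).2 ?_⟩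
      simpa using hD w
    · rintro ⟨w, hw⟩
      rw [← hw]
      exact map_zero p
  · obtain ⟨y, rfl⟩ := h.2.2 x
    exact ⟨D.mkQ (0, y), rfl⟩
  · ext x
    refine (Submodule.Quotient.eq D).2 ?_
    simpa using hD x
  · ext x
    rfl
  · refine ⟨D.liftQ (a.coprod b) ?_, ?_, ?_⟩
    · rintro _ ⟨y, rfl⟩
      have := LinearMap.congr_fun hab y
      simp only [LinearMap.comp_apply] at this
      simp [this]
    · ext x
      change a.coprod b (x, 0) = a x
      simp
    · ext x
      change a.coprod b (0, x) = b x
      simp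

/-- The kernels of an epimorphism of short exact sequences form a short exact sequence. -/
theorem ShortExact.exists_ker_map {X₁ X₂ X₃ N₁ N₂ N₃ Y₁ Y₃ : ModuleCat.{u} A}
    {f : X₁ →ₗ[A] X₂} {g : X₂ →ₗ[A] X₃} {f' : N₁ →ₗ[A] N₂} {g' : N₂ →ₗ[A] N₃}
    {y₁ : Y₁ →ₗ[A] X₁} {y₃ : Y₃ →ₗ[A] X₃} {u₁ : X₁ →ₗ[A] N₁} {u₂ : X₂ →ₗ[A] N₂}
    {u₃ : X₃ →ₗ[A] N₃} (h : ShortExact f g) (h' : ShortExact f' g')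
    (h₁ : ShortExact y₁ u₁) (h₃ : ShortExact y₃ u₃)
    (hf : u₂ ∘ₗ f = f' ∘ₗ u₁) (hg : u₃ ∘ₗ g = g' ∘ₗ u₂) :
    Function.Surjective u₂ ∧ ∃ (a : Y₁ →ₗ[A] LinearMap.ker u₂) (b : LinearMap.ker u₂ →ₗ[A] Y₃),
      ShortExact (M₂ := ModuleCat.of A (LinearMap.ker u₂)) a b := by
  have hf : ∀ x, u₂ (f x) = f' (u₁ x) := LinearMap.congr_fun hf
  have hg : ∀ x, u₃ (g x) = g' (u₂ x) := LinearMap.congr_fun hg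
  have lift : ∀ x n, u₃ (g x) = g' n → ∃ w, u₂ (x + f w) = n := by
    intro x n hxn
    obtain ⟨m, hm⟩ := (h'.2.1 (n - u₂ x)).1 (by rw [map_sub, ← hg, hxn, sub_self])
    obtain ⟨w, rfl⟩ := h₁.2.2 m
    exact ⟨w, by rw [map_add, hf, hm, add_sub_cancel]⟩
  have hY : ∀ z : LinearMap.ker u₂, ∃ y, y₃ y = g z := fun z ↦ (h₃.2.1 _).1 (by
    rw [hg, LinearMap.mem_ker.1 z.2, map_zero])
  choose y hy using hY
  refine ⟨fun n ↦ ?_, (f ∘ₗ y₁).codRestrict _ fun x ↦ ?_,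
    { toFun := y, map_add' := fun x y ↦ h₃.1 ?_, map_smul' := fun r x ↦ h₃.1 ?_ },
    fun x y hxy ↦ h₁.1 (h.1 (congrArg Subtype.val hxy)), fun z ↦ ?_, fun x ↦ ?_⟩
  · obtain ⟨x₃, hx₃⟩ := h₃.2.2 (g' n)
    obtain ⟨x, rfl⟩ := h.2.2 x₃
    obtain ⟨w, hw⟩ := lift x n hx₃
    exact ⟨_, hw⟩
  · simp [hf, h₁.2.1.apply_apply_eq_zero]
  · simp [hy]
  · simp [hy]
  · have e : y z = 0 ↔ g z = 0 := by
      rw [← hy, ← map_zero y₃, h₃.1.eq_iff]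
    refine e.trans ((h.2.1 _).trans ⟨?_, ?_⟩)
    · rintro ⟨x, hx⟩
      have : u₁ x = 0 := h'.1 (by rw [← hf, hx, LinearMap.mem_ker.1 z.2, map_zero])
      obtain ⟨w, rfl⟩ := (h₁.2.1 x).1 this
      exact ⟨w, Subtype.ext hx⟩
    · rintro ⟨w, rfl⟩
      exact ⟨y₁ w, rfl⟩
  · obtain ⟨z, hz⟩ := h.2.2 (y₃ x)
    obtain ⟨w, hw⟩ := lift z 0 (by rw [hz, h₃.2.1.apply_apply_eq_zero, map_zero])
    refine ⟨⟨_, hw⟩, h₃.1 ((hy _).trans ?_)⟩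
    simp [hz, h.2.1.apply_apply_eq_zero]

end Constructions

section VanishingRanges

variable {A : Type u} [Ring A]

/-- `Ext^i(M, N) = 0` for all `i > m`. -/
def ExtVanishAbove (m : ℕ) (M N : ModuleCat.{u} A) : Prop :=
  ∀ i, m < i → Subsingleton (ext M N i)

variable {M M₁ M₂ M₃ N : ModuleCat.{u} A} {f : M₁ →ₗ[A] M₂} {g : M₂ →ₗ[A] M₃} {m n : ℕ}

theorem ExtVanishAbove.mono (h : ExtVanishAbove m M N) (hmn : m ≤ n) : ExtVanishAbove n M N :=
  fun i hi ↦ h i (hmn.trans_lt hi)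

theorem pdLE.mono (h : pdLE M m) (hmn : m ≤ n) : pdLE M n :=
  fun i hi ↦ h i (hmn.trans_lt hi)

theorem pdLE_iff : pdLE M n ↔ ∀ N, ExtVanishAbove n M N :=
  ⟨fun h N i hi ↦ h i hi N, fun h i hi N ↦ h N i hi⟩

namespace ShortExact

theorem above_cov_mid (h : ShortExact f g) (h₁ : ExtVanishAbove m M M₁)
    (h₃ : ExtVanishAbove m M M₃) : ExtVanishAbove m M M₂ := by
  rintro (_ | i) hi
  · omega
  · exact ext_cov_mid h (h₁ _ hi) (h₃ _ hi)

theorem above_cov_right (h : ShortExact f g) (h₂ : ExtVanishAbove m M M₂)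
    (h₁ : ExtVanishAbove (m + 1) M M₁) : ExtVanishAbove m M M₃ := by
  rintro (_ | i) hi
  · omega
  · exact ext_cov_right h (h₂ _ hi) (h₁ _ (by omega))

theorem above_cov_left (h : ShortExact f g) (h₃ : ExtVanishAbove m M M₃)
    (h₂ : ExtVanishAbove (m + 1) M M₂) : ExtVanishAbove (m + 1) M M₁ := by
  rintro (_ | _ | i) hi
  · omega
  · omega
  · exact ext_cov_left h (h₃ _ (by omega)) (h₂ _ hi)

theorem above_contra_mid (h : ShortExact f g) (h₁ : ExtVanishAbove m M₁ N)
    (h₃ : ExtVanishAbove m M₃ N) : ExtVanishAbove m M₂ N := by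
  rintro (_ | i) hi
  · omega
  · exact ext_contra_mid h (h₁ _ hi) (h₃ _ hi)

theorem above_contra_left (h : ShortExact f g) (h₂ : ExtVanishAbove m M₂ N)
    (h₃ : ExtVanishAbove (m + 1) M₃ N) : ExtVanishAbove m M₁ N := by
  rintro (_ | i) hi
  · omega
  · exact ext_contra_left h (h₂ _ hi) (h₃ _ (by omega))

theorem pdLE_mid (h : ShortExact f g) (h₁ : pdLE M₁ n) (h₃ : pdLE M₃ n) : pdLE M₂ n :=
  pdLE_iff.2 fun N ↦ h.above_contra_mid (pdLE_iff.1 h₁ N) (pdLE_iff.1 h₃ N)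

theorem pdLE_left (h : ShortExact f g) (h₂ : pdLE M₂ n) (h₃ : pdLE M₃ (n + 1)) : pdLE M₁ n :=
  pdLE_iff.2 fun N ↦ h.above_contra_left (pdLE_iff.1 h₂ N) (pdLE_iff.1 h₃ N)

end ShortExact

theorem above_of_isSummand_left {S : ModuleCat.{u} A} (h : IsSummand M S)
    (hS : ExtVanishAbove m S N) : ExtVanishAbove m M N := by
  rintro (_ | i) hi
  · omega
  · exact subsingleton_ext_of_isSummand_left h (hS _ hi)

theorem above_of_isSummand_right {S : ModuleCat.{u} A} (h : IsSummand N S)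
    (hS : ExtVanishAbove m M S) : ExtVanishAbove m M N := by
  rintro (_ | i) hi
  · omega
  · exact subsingleton_ext_of_isSummand_right h (hS _ hi)

theorem pdLE_of_isSummand {S : ModuleCat.{u} A} (h : IsSummand M S) (hS : pdLE S n) : pdLE M n :=
  pdLE_iff.2 fun N ↦ above_of_isSummand_left h (pdLE_iff.1 hS N)

theorem pdLE_of_projective (hM : Module.Projective A M) (n : ℕ) : pdLE M n :=
  fun i hi _ ↦ subsingleton_ext_of_projective hM i (by omega)

theorem extVanish_of_projective (hM : Module.Projective A M) (N : ModuleCat.{u} A) :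
    ExtVanish M N :=
  fun i hi ↦ subsingleton_ext_of_projective hM i hi

theorem projective_of_pdLE_zero (h : pdLE M 0) : Module.Projective A M := by
  have hs : Function.Surjective (Finsupp.linearCombination A (id : M → M)) :=
    Finsupp.linearCombination_id_surjective A M
  obtain ⟨s, hs⟩ := exists_lift_of_ext_one
    (shortExact_ker (M₂ := ModuleCat.of A (M →₀ A)) hs) (h 1 one_pos _) LinearMap.id
  exact Module.Projective.of_split s _ hs

theorem ShortExact.isSummand_right (h : ShortExact f g) (hext : Subsingleton (ext M₃ M₁ 1)) :
    IsSummand M₃ M₂ := by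
  obtain ⟨r, hr⟩ := exists_lift_of_ext_one h hext LinearMap.id
  exact ⟨r, g, hr⟩

theorem IsSummand.trans {S : ModuleCat.{u} A} (h : IsSummand M N) (h' : IsSummand N S) :
    IsSummand M S := by
  obtain ⟨s, r, hsr⟩ := h
  obtain ⟨s', r', hsr'⟩ := h'
  refine ⟨s' ∘ₗ s, r ∘ₗ r', LinearMap.ext fun x ↦ ?_⟩
  have h₁ := LinearMap.congr_fun hsr' (s x)
  have h₂ := LinearMap.congr_fun hsr x
  simp only [LinearMap.comp_apply, LinearMap.id_apply] at h₁ h₂ ⊢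
  rw [h₁, h₂]

theorem IsSummand.of_equiv (e : M ≃ₗ[A] N) : IsSummand M N :=
  ⟨e, e.symm, LinearMap.ext e.symm_apply_apply⟩

theorem IsSummand.finite (h : IsSummand M N) (hN : Module.Finite A N) : Module.Finite A M := by
  obtain ⟨s, r, hsr⟩ := h
  exact Module.Finite.of_surjective r fun x ↦ ⟨s x, LinearMap.congr_fun hsr x⟩

theorem isSummand_prod_left (M N : ModuleCat.{u} A) : IsSummand M (ModuleCat.of A (M × N)) :=
  ⟨LinearMap.inl A M N, LinearMap.fst A M N, LinearMap.fst_comp_inl A M N⟩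

theorem isSummand_prod_right (M N : ModuleCat.{u} A) : IsSummand N (ModuleCat.of A (M × N)) :=
  ⟨LinearMap.inr A M N, LinearMap.snd A M N, LinearMap.snd_comp_inr A M N⟩

/-- A summand has a complement. -/
theorem IsSummand.exists_prod_equiv (h : IsSummand M N) :
    ∃ K : ModuleCat.{u} A, Nonempty (N ≃ₗ[A] (M × K)) := by
  obtain ⟨s, r, hsr⟩ := h
  have hsr : ∀ x, r (s x) = x := LinearMap.congr_fun hsr
  have hr : ∀ x, (LinearMap.id - s ∘ₗ r : N →ₗ[A] N) x ∈ LinearMap.ker r := fun x ↦ by simp [hsr]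
  refine ⟨ModuleCat.of A (LinearMap.ker r), ⟨LinearEquiv.ofLinearMap
    (r.prod ((LinearMap.id - s ∘ₗ r).codRestrict (LinearMap.ker r) hr))
    (s.coprod (LinearMap.ker r).subtype) ?_ ?_⟩⟩
  · refine LinearMap.ext fun x ↦ ?_
    rcases x with ⟨x, ⟨y, hy : r y = 0⟩⟩
    refine Prod.ext ?_ (Subtype.ext ?_)
    · simp [hsr, hy]
    · simp [hsr, hy]
  · refine LinearMap.ext fun x ↦ ?_
    simp

end VanishingRanges

section Additive

variable {A : Type u} [Ring A]

theorem inAddOf_eq_iff {T M : ModuleCat.{u} A} :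
    InAddOf (fun Y ↦ Y = T) M ↔ ∃ k : ℕ, IsSummand M (ModuleCat.of A (Fin k → T)) := by
  constructor
  · rintro ⟨k, F, hF, h⟩
    obtain rfl : F = fun _ ↦ T := funext hF
    exact ⟨k, h.trans (.of_equiv
      (DirectSum.linearEquivFunOnFintype A (Fin k) fun _ ↦ (T : Type u)))⟩
  · rintro ⟨k, h⟩
    exact ⟨k, fun _ ↦ T, fun _ ↦ rfl, h.trans (.of_equiv
      (DirectSum.linearEquivFunOnFintype A (Fin k) fun _ ↦ (T : Type u)).symm)⟩

theorem inAddOf_self (T : ModuleCat.{u} A) : InAddOf (fun Y ↦ Y = T) T :=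
  inAddOf_eq_iff.2 ⟨1, .of_equiv (LinearEquiv.funUnique (Fin 1) A T).symm⟩

theorem inAddOf_pow (T : ModuleCat.{u} A) (k : ℕ) :
    InAddOf (fun Y ↦ Y = T) (ModuleCat.of A (Fin k → T)) :=
  inAddOf_eq_iff.2 ⟨k, .of_equiv (LinearEquiv.refl A _)⟩

theorem InAddOf.of_isSummand {T M N : ModuleCat.{u} A} (hN : InAddOf (fun Y ↦ Y = T) N)
    (h : IsSummand M N) : InAddOf (fun Y ↦ Y = T) M := by
  obtain ⟨k, hk⟩ := inAddOf_eq_iff.1 hN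
  exact inAddOf_eq_iff.2 ⟨k, h.trans hk⟩

theorem InAddOf.mono_isSummand {T T' M : ModuleCat.{u} A} (hM : InAddOf (fun Y ↦ Y = T) M)
    (h : IsSummand T T') : InAddOf (fun Y ↦ Y = T') M := by
  obtain ⟨k, hk⟩ := inAddOf_eq_iff.1 hM
  obtain ⟨s, r, hsr⟩ := h
  refine inAddOf_eq_iff.2 ⟨k, hk.trans ⟨s.compLeft (Fin k), r.compLeft (Fin k), ?_⟩⟩
  refine LinearMap.ext fun v ↦ funext fun i ↦ ?_
  exact LinearMap.congr_fun hsr (v i)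

theorem shortExact_pi_succ (T : ModuleCat.{u} A) (k : ℕ) :
    ShortExact (M₁ := T) (M₂ := ModuleCat.of A (Fin (k + 1) → T))
      (M₃ := ModuleCat.of A (Fin k → T)) (LinearMap.single A (fun _ ↦ (T : Type u)) 0)
      (LinearMap.funLeft A T Fin.succ) := by
  refine ⟨Pi.single_injective (M := fun _ : Fin (k + 1) ↦ (T : Type u)) 0,
    fun v ↦ ⟨fun h ↦ ⟨v 0, ?_⟩, ?_⟩, fun v ↦ ⟨Fin.cons 0 v, ?_⟩⟩
  · funext i
    refine Fin.cases ?_ (fun i ↦ ?_) i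
    · simp
    · exact (Pi.single_eq_of_ne (M := fun _ : Fin (k + 1) ↦ (T : Type u)) i.succ_ne_zero
        (v 0)).trans (congrFun h i).symm
  · rintro ⟨x, rfl⟩
    funext i
    exact Pi.single_eq_of_ne (M := fun _ : Fin (k + 1) ↦ (T : Type u)) i.succ_ne_zero x
  · funext i
    simp [LinearMap.funLeft]

/-- A class of modules closed under extensions and summands contains `add T` for each of its
members `T`. -/
theorem InAddOf.of_closed {C : ModuleCat.{u} A → Prop}
    (hz : ∀ M : ModuleCat.{u} A, Subsingleton M → C M)
    (hext : ∀ (M₁ M₂ M₃ : ModuleCat.{u} A) (f : M₁ →ₗ[A] M₂) (g : M₂ →ₗ[A] M₃),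
      ShortExact f g → C M₁ → C M₃ → C M₂)
    (hsum : ∀ M N : ModuleCat.{u} A, IsSummand M N → C N → C M)
    {T M : ModuleCat.{u} A} (hM : InAddOf (fun Y ↦ Y = T) M) (hT : C T) : C M := by
  obtain ⟨k, hk⟩ := inAddOf_eq_iff.1 hM
  refine hsum _ _ hk ?_
  clear hk
  induction k with
  | zero => exact hz _ (inferInstance : Subsingleton (Fin 0 → T))
  | succ k ih => exact hext _ _ _ _ _ (shortExact_pi_succ T k) hT ih

theorem extVanish_left_of_inAddOf {T M N : ModuleCat.{u} A} (hM : InAddOf (fun Y ↦ Y = T) M)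
    (hT : ExtVanish T N) : ExtVanish M N :=
  hM.of_closed (C := fun M ↦ ExtVanishAbove 0 M N)
    (fun M _ i hi ↦ subsingleton_ext_of_projective
      (Module.Projective.of_free (P := M)) i hi)
    (fun _ _ _ _ _ h h₁ h₃ ↦ h.above_contra_mid h₁ h₃)
    (fun _ _ h ↦ above_of_isSummand_left h) hT

theorem extVanish_right_of_inAddOf {T M N : ModuleCat.{u} A} (hN : InAddOf (fun Y ↦ Y = T) N)
    (hT : ExtVanish M T) : ExtVanish M N :=
  hN.of_closed (C := fun N ↦ ExtVanishAbove 0 M N)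
    (fun _ _ i hi ↦ subsingleton_ext_of_injective
      ⟨fun _ _ _ _ _ _ _ _ _ ↦ ⟨0, fun _ ↦ Subsingleton.elim _ _⟩⟩ i hi)
    (fun _ _ _ _ _ h h₁ h₃ ↦ h.above_cov_mid h₁ h₃)
    (fun _ _ h ↦ above_of_isSummand_right h) hT

/-- Every finitely generated module is the quotient of a finitely generated projective module. -/
theorem exists_projective_cover (M : ModuleCat.{u} A) (hM : Module.Finite A M) :
    ∃ (P : ModuleCat.{u} A) (p : P →ₗ[A] M), Module.Finite A P ∧ Module.Projective A P ∧
      Function.Surjective p := by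
  obtain ⟨n, p, hp⟩ := Module.Finite.exists_fin' A M
  exact ⟨ModuleCat.of A (Fin n → A), p, (inferInstance : Module.Finite A (Fin n → A)),
    (inferInstance : Module.Projective A (Fin n → A)), hp⟩

theorem ShortExact.finite_left [IsNoetherianRing A] {M₁ M₂ M₃ : ModuleCat.{u} A} {f : M₁ →ₗ[A] M₂}
    {g : M₂ →ₗ[A] M₃} (h : ShortExact f g) (h₂ : Module.Finite A M₂) : Module.Finite A M₁ :=
  Module.Finite.of_injective f h.1

theorem ShortExact.finite_mid {M₁ M₂ M₃ : ModuleCat.{u} A} {f : M₁ →ₗ[A] M₂}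
    {g : M₂ →ₗ[A] M₃} (h : ShortExact f g) (h₁ : Module.Finite A M₁) (h₃ : Module.Finite A M₃) :
    Module.Finite A M₂ := by
  have : Module.Finite A (LinearMap.ker g) := by
    rw [h.2.1.linearMap_ker_eq]
    infer_instance
  have : Module.Finite A (M₂ ⧸ LinearMap.ker g) :=
    .equiv (g.quotKerEquivOfSurjective h.2.2).symm
  exact .of_submodule_quotient (LinearMap.ker g)

end Additive

section ResolvingSubcategories

variable {A : Type u} [Ring A] {X : ModuleCat.{u} A → Prop} {M N : ModuleCat.{u} A}

theorem Resolving.of_subsingleton (hX : Resolving X) (hM : Subsingleton M) : X M :=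
  hX.1 M inferInstance (Module.Projective.of_free (P := M))

theorem Resolving.of_equiv (hX : Resolving X) (e : M ≃ₗ[A] N) (hN : X N) : X M :=
  hX.2.2 M N (ModuleCat.of A PUnit.{u + 1}) (e : M →ₗ[A] N) 0
    ⟨e.injective, fun _ ↦ ⟨fun _ ↦ e.surjective _, fun _ ↦ rfl⟩, fun _ ↦ ⟨0, rfl⟩⟩ hN
    (hX.of_subsingleton (inferInstance : Subsingleton PUnit))

theorem Resolving.prod (hX : Resolving X) (hM : X M) (hN : X N) : X (ModuleCat.of A (M × N)) :=
  hX.2.1 _ _ _ _ _ (shortExact_prod M N) hM hN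

/-- A resolving subcategory of modules of finite projective dimension is closed under summands. -/
theorem Resolving.of_isSummand [IsNoetherianRing A] (hX : Resolving X)
    (hP : ∀ M, X M → InP M) (h : IsSummand M N) (hN : X N) : X M := by
  have key : ∀ (n : ℕ) (M K : ModuleCat.{u} A), X (ModuleCat.of A (M × K)) →
      pdLE (ModuleCat.of A (M × K)) n → X M := by
    intro n
    induction n with
    | zero =>
      intro M K hMK hpd
      have hsum := isSummand_prod_left M K
      exact hX.1 M (hsum.finite (hP _ hMK).1) (projective_of_pdLE_zero (pdLE_of_isSummand hsum hpd))
    | succ n ih =>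
      intro M K hMK hpd
      obtain ⟨P, p, hPf, hPp, hp⟩ := exists_projective_cover M
        ((isSummand_prod_left M K).finite (hP _ hMK).1)
      obtain ⟨Q, q, hQf, hQp, hq⟩ := exists_projective_cover K
        ((isSummand_prod_right M K).finite (hP _ hMK).1)
      have hp' := shortExact_ker hp
      have hq' := shortExact_ker hq
      have h₁ : ShortExact
          (M₁ := ModuleCat.of A
            (ModuleCat.of A (LinearMap.ker p) × ModuleCat.of A (LinearMap.ker q)))
          (M₂ := ModuleCat.of A (P × Q)) (M₃ := ModuleCat.of A (M × K))
          ((LinearMap.ker p).subtype.prodMap (LinearMap.ker q).subtype) (p.prodMap q) :=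
        ⟨hp'.1.prodMap hq'.1, by
          rintro ⟨x, y⟩
          simp, hp.prodMap hq⟩
      have hPQ : Module.Projective A (ModuleCat.of A (P × Q)) :=
        (inferInstance : Module.Projective A (P × Q))
      have hΩ : X (ModuleCat.of A (LinearMap.ker p)) :=
        ih _ _ (hX.2.2 _ _ _ _ _ h₁ (hX.prod (hX.1 P hPf hPp) (hX.1 Q hQf hQp)) hMK)
          (h₁.pdLE_left (pdLE_of_projective hPQ n) hpd)
      have h₂ : ShortExact (M₁ := ModuleCat.of A (LinearMap.ker p))
          (M₂ := ModuleCat.of A (P × K)) (M₃ := ModuleCat.of A (M × K))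
          (LinearMap.inl A P K ∘ₗ (LinearMap.ker p).subtype)
          (p.prodMap (LinearMap.id : K →ₗ[A] K)) :=
        ⟨LinearMap.inl_injective.comp hp'.1, by
          rintro ⟨x, y⟩
          simp [Prod.ext_iff, eq_comm (a := (0 : K))], hp.prodMap Function.surjective_id⟩
      have h₃ : ShortExact (M₁ := M) (M₂ := ModuleCat.of A (P × ModuleCat.of A (M × K)))
          (M₃ := ModuleCat.of A (P × K)) (LinearMap.inr A P (M × K) ∘ₗ LinearMap.inl A M K)
          ((LinearMap.id : P →ₗ[A] P).prodMap (LinearMap.snd A M K)) :=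
        ⟨LinearMap.inr_injective.comp LinearMap.inl_injective, by
          rintro ⟨x, y, z⟩
          simp [eq_comm],
        Function.surjective_id.prodMap (LinearMap.snd_surjective (R := A) (M := M) (M₂ := K))⟩
      exact hX.2.2 _ _ _ _ _ h₃ (hX.prod (hX.1 P hPf hPp) hMK) (hX.2.1 _ _ _ _ _ h₂ hΩ hMK)
  obtain ⟨K, ⟨e⟩⟩ := h.exists_prod_equiv
  have hMK : X (ModuleCat.of A (M × K)) := hX.of_equiv e.symm hN
  obtain ⟨n, hn⟩ := (hP _ hMK).2
  exact key n M K hMK hn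

theorem Resolving.approx_surjective (hX : Resolving X) (hM : Module.Finite A M)
    {f : N →ₗ[A] M} (hf : IsRightApprox X f) : Function.Surjective f := by
  obtain ⟨P, p, hPf, hPp, hp⟩ := exists_projective_cover M hM
  obtain ⟨h, rfl⟩ := hf.2 P (hX.1 P hPf hPp) p
  exact Function.Surjective.of_comp hp

/-- Minimal right approximations exist. -/
theorem exists_minimal_approx [IsArtinianRing A] (hX : Resolving X)
    (hP : ∀ M, X M → InP M) (hc : ContravariantlyFinite X) (hM : Module.Finite A M) :
    ∃ (XM : ModuleCat.{u} A) (f : XM →ₗ[A] M), IsMinimalRightApprox X f := by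
  obtain ⟨XM₀, f₀, hf₀⟩ := hc M hM
  obtain ⟨⟨XM, f⟩, hf, hmin⟩ := WellFounded.has_min
    (InvImage.wf (fun p : (XM : ModuleCat.{u} A) × (XM →ₗ[A] M) ↦ Module.length A p.1)
      wellFounded_lt)
    {p | IsRightApprox X p.2} ⟨⟨XM₀, f₀⟩, hf₀⟩
  refine ⟨XM, f, hf, fun g hg ↦ ?_⟩
  have : Module.Finite A XM := (hP _ hf.1).1
  have hpow : ∀ n : ℕ, f ∘ₗ (g ^ n) = f := by
    intro n
    induction n with
    | zero => rfl
    | succ n ih => rw [pow_succ, Module.End.mul_eq_comp, ← LinearMap.comp_assoc, ih, hg]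
  obtain ⟨n, hn, hn0⟩ :=
    (g.eventually_isCompl_ker_pow_range_pow.and (Filter.eventually_ge_atTop 1)).exists
  let S := LinearMap.range (g ^ n)
  have hS : IsSummand (ModuleCat.of A S) XM :=
    ⟨S.subtype, S.projectionOnto _ hn.symm, LinearMap.ext fun x ↦ by simp [S]⟩
  have hSa : IsRightApprox X (XM := ModuleCat.of A S) (f ∘ₗ S.subtype) := by
    refine ⟨hX.of_isSummand hP hS hf.1, fun Y hY k ↦ ?_⟩
    obtain ⟨k, rfl⟩ := hf.2 Y hY k
    refine ⟨(g ^ n).rangeRestrict ∘ₗ k, LinearMap.ext fun y ↦ ?_⟩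
    exact LinearMap.congr_fun (hpow n) (k y)
  have hlen := hmin ⟨ModuleCat.of A S, _⟩ hSa
  have htop : S = ⊤ := by
    by_contra hne
    refine hlen ?_
    exact Submodule.length_lt hne
  have hsurj : Function.Surjective g := by
    have h₁ : Function.Surjective (g ^ n) := LinearMap.range_eq_top.1 htop
    obtain ⟨m, rfl⟩ := Nat.exists_eq_add_of_le' hn0
    rw [pow_succ', Module.End.mul_eq_comp] at h₁
    exact Function.Surjective.of_comp h₁
  exact IsNoetherian.bijective_of_surjective_endomorphism g hsurj

/-- Wakamatsu's lemma. -/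
theorem inPerpOf_ker_of_minimal [IsNoetherianRing A] (hX : Resolving X)
    (hP : ∀ M, X M → InP M) {f : N →ₗ[A] M} (hf : IsMinimalRightApprox X f) :
    InPerpOf X (ModuleCat.of A (LinearMap.ker f)) := by
  have one : ∀ L, X L → Subsingleton (ext L (ModuleCat.of A (LinearMap.ker f)) 1) := by
    intro L hL
    obtain ⟨P, p, hPf, hPp, hp⟩ := exists_projective_cover L (hP L hL).1
    have hp' := shortExact_ker hp
    refine ext_one_right_of_extend hp' (fun φ ↦ ?_) (subsingleton_ext_of_projective hPp 1 one_pos)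
    obtain ⟨Z, n, q, z, hz, hnq, -, huniv⟩ :=
      hp'.exists_pushout ((LinearMap.ker f).subtype ∘ₗ φ)
    obtain ⟨c, hcn, hcq⟩ := huniv M f 0 (LinearMap.ext fun x ↦ (φ x).2)
    obtain ⟨h, rfl⟩ := hf.1.2 Z (hX.2.1 _ _ _ _ _ hz hf.1.1 hL) c
    have hg := hf.2 (h ∘ₗ n) hcn
    let e := LinearEquiv.ofBijective (h ∘ₗ n) hg
    have he : ∀ x, f (e.symm x) = f x := fun x ↦ by
      obtain ⟨y, rfl⟩ := e.surjective x
      rw [e.symm_apply_apply]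
      exact (LinearMap.congr_fun hcn y).symm
    refine ⟨(e.symm.toLinearMap ∘ₗ h ∘ₗ q).codRestrict _ fun x ↦ ?_, LinearMap.ext fun x ↦
      Subtype.ext ?_⟩
    · exact (he _).trans (LinearMap.congr_fun hcq x)
    · have := LinearMap.congr_fun hnq x
      refine (LinearEquiv.symm_apply_eq e).2 ?_
      exact congrArg h this.symm
  have all : ∀ (i : ℕ) (L), X L →
      Subsingleton (ext L (ModuleCat.of A (LinearMap.ker f)) (i + 1)) := by
    intro i
    induction i with
    | zero => exact one
    | succ i ih =>
      intro L hL
      obtain ⟨P, p, hPf, hPp, hp⟩ := exists_projective_cover L (hP L hL).1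
      have hp' := shortExact_ker hp
      exact ext_contra_right hp' (ih _ (hX.2.2 _ _ _ _ _ hp' (hX.1 P hPf hPp) hL))
        (subsingleton_ext_of_projective hPp _ (Nat.succ_pos _))
  rintro L hL (_ | i) hi
  · omega
  · exact all i L hL

end ResolvingSubcategories

section SpecialApproximations

variable {A : Type u} [Ring A] {X : ModuleCat.{u} A → Prop}

/-- `M` is the quotient of a module in `X` of projective dimension at most `n` by a submodule
in `X^⊥`. -/
def HasSpecialApprox (X : ModuleCat.{u} A → Prop) (n : ℕ) (M : ModuleCat.{u} A) : Prop :=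
  ∃ (Y XM : ModuleCat.{u} A) (a : Y →ₗ[A] XM) (f : XM →ₗ[A] M),
    ShortExact a f ∧ X XM ∧ InPerpOf X Y ∧ pdLE XM n

theorem InPerpOf.mid {M₁ M₂ M₃ : ModuleCat.{u} A} {f : M₁ →ₗ[A] M₂} {g : M₂ →ₗ[A] M₃}
    (h : ShortExact f g) (h₁ : InPerpOf X M₁) (h₃ : InPerpOf X M₃) : InPerpOf X M₂ :=
  fun N hN ↦ h.above_cov_mid (m := 0) (h₁ N hN) (h₃ N hN)

theorem hasSpecialApprox_of_minimal [IsNoetherianRing A] (hX : Resolving X)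
    (hP : ∀ M, X M → InP M) {XM M : ModuleCat.{u} A} (hM : Module.Finite A M)
    {f : XM →ₗ[A] M} (hf : IsMinimalRightApprox X f) {n : ℕ} (hn : pdLE XM n) :
    HasSpecialApprox X n M :=
  ⟨_, XM, _, f, shortExact_ker (hX.approx_surjective hM hf.1), hf.1.1,
    inPerpOf_ker_of_minimal hX hP hf, hn⟩

theorem exists_hasSpecialApprox [IsArtinianRing A] (hX : Resolving X)
    (hP : ∀ M, X M → InP M) (hc : ContravariantlyFinite X) {M : ModuleCat.{u} A}
    (hM : Module.Finite A M) : ∃ n, HasSpecialApprox X n M := by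
  obtain ⟨XM, f, hf⟩ := exists_minimal_approx hX hP hc hM
  obtain ⟨n, hn⟩ := (hP _ hf.1.1).2
  exact ⟨n, hasSpecialApprox_of_minimal hX hP hM hf hn⟩

/-- The source of the minimal approximation of a summand of `N` is a summand of the source of any
approximation of `N`. -/
theorem isSummand_of_minimal {M N XM XN : ModuleCat.{u} A} {f : XM →ₗ[A] M} {g : XN →ₗ[A] N}
    (hf : IsMinimalRightApprox X f) (hg : IsRightApprox X g) (h : IsSummand M N) :
    IsSummand XM XN := by
  obtain ⟨s, r, hsr⟩ := h
  obtain ⟨u, hu⟩ := hg.2 XM hf.1.1 (s ∘ₗ f)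
  obtain ⟨v, hv⟩ := hf.1.2 XN hg.1 (r ∘ₗ g)
  have huv : f ∘ₗ (v ∘ₗ u) = f := by
    rw [← LinearMap.comp_assoc, hv, LinearMap.comp_assoc, hu, ← LinearMap.comp_assoc, hsr,
      LinearMap.id_comp]
  let e := LinearEquiv.ofBijective _ (hf.2 _ huv)
  exact ⟨u, e.symm.toLinearMap ∘ₗ v, LinearMap.ext fun x ↦ e.symm_apply_apply x⟩

theorem isSummand_quotient_jacobson [IsArtinianRing A] (S : ModuleCat.{u} A)
    (hS : IsSimpleModule A S) : IsSummand S (ModuleCat.of A (A ⧸ Ring.jacobson A)) := by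
  obtain ⟨m, hm, ⟨e⟩⟩ := isSimpleModule_iff_quot_maximal.1 hS
  have hss : IsSemisimpleModule A (A ⧸ Ring.jacobson A) :=
    IsArtinian.isSemisimpleModule_iff_jacobson A _ |>.2 (Module.jacobson_quotient_jacobson A A)
  have hsurj : Function.Surjective (Submodule.factor (Ring.jacobson_le_of_isMaximal m)) :=
    Submodule.factor_surjective _
  obtain ⟨s, hs⟩ := IsSemisimpleModule.lifting_property _ hsurj e.toLinearMap
  exact ⟨s, e.symm.toLinearMap ∘ₗ Submodule.factor (Ring.jacobson_le_of_isMaximal m),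
    LinearMap.ext fun x ↦ e.symm_apply_eq.2 (LinearMap.congr_fun hs x)⟩

theorem HasSpecialApprox.extension [IsNoetherianRing A] (hX : Resolving X)
    (hP : ∀ M, X M → InP M) {n : ℕ} {N₁ N₂ N₃ : ModuleCat.{u} A} {f : N₁ →ₗ[A] N₂}
    {g : N₂ →ₗ[A] N₃} (h : ShortExact f g) (h₁ : HasSpecialApprox X n N₁)
    (h₃ : HasSpecialApprox X n N₃) : HasSpecialApprox X n N₂ := by
  obtain ⟨Y₁, X₁, a₁, u₁, hs₁, hX₁, hY₁, hn₁⟩ := h₁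
  obtain ⟨Y₃, X₃, a₃, u₃, hs₃, hX₃, hY₃, hn₃⟩ := h₃
  obtain ⟨P, p, hPf, hPp, hp⟩ := exists_projective_cover X₃ (hP _ hX₃).1
  have hp' := shortExact_ker hp
  have hK : X (ModuleCat.of A (LinearMap.ker p)) := hX.2.2 _ _ _ _ _ hp' (hX.1 P hPf hPp) hX₃
  obtain ⟨b, hb⟩ := Module.projective_lifting_property g (u₃ ∘ₗ p) h.2.2
  have hk : ∀ x : LinearMap.ker p, ∃ y, f y = b x := fun x ↦ (h.2.1 _).1 (by
    have := LinearMap.congr_fun hb x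
    simp only [LinearMap.comp_apply] at this
    rw [this, LinearMap.mem_ker.1 x.2, map_zero])
  choose k hk using hk
  obtain ⟨k', hk'⟩ := exists_lift_of_ext_one (M := ModuleCat.of A (LinearMap.ker p)) hs₁
    (hY₁ _ hK 1 one_pos)
    { toFun := k
      map_add' := fun x y ↦ h.1 (by simp [hk])
      map_smul' := fun r x ↦ h.1 (by simp [hk]) }
  obtain ⟨E, i, q, z, hz, hiq, hzq, huniv⟩ := hp'.exists_pushout k'
  obtain ⟨c, hci, hcq⟩ := huniv N₂ (f ∘ₗ u₁) b (LinearMap.ext fun x ↦ by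
    have := LinearMap.congr_fun hk' x
    change f (u₁ (k' x)) = b x
    rw [← hk]
    exact congrArg f this)
  have hgc : u₃ ∘ₗ z = g ∘ₗ c := by
    ext e
    obtain ⟨y, hy⟩ := hp (z e)
    obtain ⟨x, hx⟩ := (hz.2.1 (e - q y)).1 (by
      rw [map_sub, sub_eq_zero, ← hy]
      exact (LinearMap.congr_fun hzq y).symm)
    obtain rfl := eq_add_of_sub_eq hx.symm
    have h₁ := LinearMap.congr_fun hci x
    have h₂ := LinearMap.congr_fun hcq y
    have h₃ := LinearMap.congr_fun hb y
    simp only [LinearMap.comp_apply] at h₁ h₂ h₃ ⊢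
    rw [← hy, map_add c, h₁, h₂, map_add g, h.2.1.apply_apply_eq_zero, zero_add, h₃]
  obtain ⟨hc, a', b', hker⟩ := hz.exists_ker_map h hs₁ hs₃ hci hgc
  exact ⟨_, E, _, c, shortExact_ker hc, hX.2.1 _ _ _ _ _ hz hX₁ hX₃, hY₁.mid hker hY₃,
    hz.pdLE_mid hn₁ hn₃⟩

/-- A contravariantly finite resolving subcategory of modules of finite projective dimension has
bounded projective dimension. -/
theorem exists_pdLE [IsArtinianRing A] (hX : Resolving X) (hP : ∀ M, X M → InP M)
    (hc : ContravariantlyFinite X) : ∃ n, ∀ M, X M → pdLE M n := by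
  obtain ⟨XJ, g, hg⟩ := hc (ModuleCat.of A (A ⧸ Ring.jacobson A))
    (inferInstance : Module.Finite A (A ⧸ Ring.jacobson A))
  obtain ⟨n, hn⟩ := (hP _ hg.1).2
  refine ⟨n, fun M hM ↦ ?_⟩
  have key : ∀ (M : Type u) [AddCommGroup M] [Module A M], IsFiniteLength A M →
      HasSpecialApprox X n (ModuleCat.of A M) := by
    intro M _ _ hM
    induction hM with
    | @of_subsingleton M =>
      refine ⟨ModuleCat.of A M, ModuleCat.of A M, LinearMap.id, 0,
        ⟨Function.injective_id, fun x ↦ ?_, fun x ↦ ⟨0, Subsingleton.elim _ _⟩⟩,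
        hX.of_subsingleton ‹_›, fun N _ i hi ↦ ?_, pdLE_of_projective ?_ n⟩
      · exact ⟨fun _ ↦ ⟨x, rfl⟩, fun _ ↦ Subsingleton.elim _ _⟩
      · exact subsingleton_ext_of_injective
          ⟨fun _ _ _ _ _ _ _ _ _ ↦ ⟨0, fun _ ↦ Subsingleton.elim _ _⟩⟩ i hi
      · exact Module.Projective.of_free (P := M)
    | @of_simple_quotient M _ _ K hK hKl ih =>
      refine ih.extension hX hP (N₂ := ModuleCat.of A M) (N₃ := ModuleCat.of A (M ⧸ K))
        (f := K.subtype) (g := K.mkQ)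
        ⟨Subtype.val_injective, fun x ↦ by simp, K.mkQ_surjective⟩ ?_
      have hfin : Module.Finite A (M ⧸ K) := inferInstance
      obtain ⟨XS, f, hf⟩ := exists_minimal_approx hX hP hc (M := ModuleCat.of A (M ⧸ K)) hfin
      exact hasSpecialApprox_of_minimal hX hP hfin hf
        (pdLE_of_isSummand (isSummand_of_minimal hf hg (isSummand_quotient_jacobson _ hK)) hn)
  have hfin := (hP M hM).1
  obtain ⟨Y, XM, a, f, hs, hXM, hY, hpd⟩ :=
    key M (isFiniteLength_iff_isNoetherian_isArtinian.2 ⟨inferInstance, inferInstance⟩)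
  exact pdLE_of_isSummand (hs.isSummand_right (hY M hM 1 one_pos)) hpd

end SpecialApproximations

section HomApproximations

variable {A : Type u} [Ring A]

/-- Every homomorphism from a finitely generated module `T` to a finitely generated module `Y`
over a finite algebra factors through a fixed map from a power of `T`. -/
theorem exists_hom_approx (R : Type u) [CommRing R] [IsNoetherianRing R] [Algebra R A]
    [Module.Finite R A] {T Y : Type u} [AddCommGroup T] [Module A T] [Module.Finite A T]
    [AddCommGroup Y] [Module A Y] [Module.Finite A Y] :
    ∃ (k : ℕ) (φ : (Fin k → T) →ₗ[A] Y), ∀ g : T →ₗ[A] Y,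
      ∃ h : T →ₗ[A] (Fin k → T), φ ∘ₗ h = g := by
  let _ : Module R T := Module.compHom T (algebraMap R A)
  let _ : Module R Y := Module.compHom Y (algebraMap R A)
  have _ : IsScalarTower R A T := ⟨fun r a x ↦ by rw [Algebra.smul_def, mul_smul]; rfl⟩
  have _ : IsScalarTower R A Y := ⟨fun r a x ↦ by rw [Algebra.smul_def, mul_smul]; rfl⟩
  have _ : SMulCommClass A R T := ⟨fun a r x ↦ by
    rw [← algebraMap_smul A r x, ← algebraMap_smul A r (a • x), smul_smul, smul_smul,
      Algebra.commutes]⟩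
  have _ : SMulCommClass A R Y := ⟨fun a r x ↦ by
    rw [← algebraMap_smul A r x, ← algebraMap_smul A r (a • x), smul_smul, smul_smul,
      Algebra.commutes]⟩
  have _ : Module.Finite R T := Module.Finite.trans A T
  have _ : Module.Finite R Y := Module.Finite.trans A Y
  have hN : IsNoetherian R (T →ₗ[A] Y) :=
    isNoetherian_of_injective (LinearMap.restrictScalarsₗ R A T Y R)
      (LinearMap.restrictScalars_injective R)
  obtain ⟨k, s, hs⟩ := Module.Finite.exists_fin (R := R) (M := T →ₗ[A] Y)
  refine ⟨k, LinearMap.lsum A (fun _ ↦ T) ℕ s, fun g ↦ ?_⟩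
  obtain ⟨c, hc⟩ := (Submodule.mem_span_range_iff_exists_fun R).1
    (hs ▸ Submodule.mem_top : g ∈ Submodule.span R (Set.range s))
  refine ⟨LinearMap.pi fun i ↦ c i • LinearMap.id, LinearMap.ext fun x ↦ ?_⟩
  rw [← hc]
  simp [LinearMap.lsum_apply, LinearMap.sum_apply, LinearMap.map_smul_of_tower]

theorem exists_comp_eq_of_inAddOf {T U Y Z : ModuleCat.{u} A} {φ : Z →ₗ[A] Y}
    (hφ : ∀ g : T →ₗ[A] Y, ∃ h : T →ₗ[A] Z, φ ∘ₗ h = g) (hU : InAddOf (fun X ↦ X = T) U)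
    (g : U →ₗ[A] Y) : ∃ h : U →ₗ[A] Z, φ ∘ₗ h = g := by
  obtain ⟨m, s, r, hsr⟩ := inAddOf_eq_iff.1 hU
  choose h hh using fun j : Fin m ↦ hφ (g ∘ₗ r ∘ₗ LinearMap.single A (fun _ ↦ T) j)
  refine ⟨LinearMap.lsum A (fun _ ↦ T) ℕ h ∘ₗ s, ?_⟩
  have : φ ∘ₗ LinearMap.lsum A (fun _ ↦ T) ℕ h = g ∘ₗ r := by
    refine LinearMap.pi_ext' fun j ↦ ?_
    have : LinearMap.lsum A (fun _ ↦ T) ℕ h ∘ₗ LinearMap.single A (fun _ ↦ T) j = h j :=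
      LinearMap.ext fun x ↦ LinearMap.lsum_piSingle ..
    rw [LinearMap.comp_assoc, this, hh, LinearMap.comp_assoc]
  rw [← LinearMap.comp_assoc, this, LinearMap.comp_assoc, hsr, LinearMap.comp_id]

end HomApproximations

section Coresolutions

variable {A : Type u} [Ring A]

/-- `M` has a coresolution of length `n` by modules in `ω`. -/
def HasCoresolution (ω : ModuleCat.{u} A → Prop) : ℕ → ModuleCat.{u} A → Prop
  | 0, M => ω M
  | n + 1, M => ∃ (W C : ModuleCat.{u} A) (f : M →ₗ[A] W) (g : W →ₗ[A] C),
      ShortExact f g ∧ ω W ∧ HasCoresolution ω n C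

variable {ω ω' : ModuleCat.{u} A → Prop} {n : ℕ} {M : ModuleCat.{u} A}

theorem HasCoresolution.mono (hω : ∀ W, ω W → ω' W) (h : HasCoresolution ω n M) :
    HasCoresolution ω' n M := by
  induction n generalizing M with
  | zero => exact hω M h
  | succ n ih =>
    obtain ⟨W, C, f, g, hs, hW, hC⟩ := h
    exact ⟨W, C, f, g, hs, hω W hW, ih hC⟩

theorem HasCoresolution.mem {X : ModuleCat.{u} A → Prop} (hX : Resolving X)
    (hω : ∀ W, ω W → X W) (h : HasCoresolution ω n M) : X M := by
  induction n generalizing M with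
  | zero => exact hω M h
  | succ n ih =>
    obtain ⟨W, C, f, g, hs, hW, hC⟩ := h
    exact hX.2.2 _ _ _ f g hs (hω W hW) (ih hC)

theorem HasCoresolution.extVanish {Y : ModuleCat.{u} A} (hω : ∀ W, ω W → ExtVanish W Y)
    (h : HasCoresolution ω n M) : ExtVanish M Y := by
  induction n generalizing M with
  | zero => exact hω M h
  | succ n ih =>
    obtain ⟨W, C, f, g, hs, hW, hC⟩ := h
    exact hs.above_contra_left (m := 0) (hω W hW) (ExtVanishAbove.mono (ih hC) (Nat.zero_le 1))

theorem HasCoresolution.exists_single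
    (hω : ∀ W W', ω W → ω W' → ω (ModuleCat.of A (W × W'))) (h : HasCoresolution ω n M) :
    ∃ T, ω T ∧ HasCoresolution (InAddOf fun X ↦ X = T) n M := by
  induction n generalizing M with
  | zero => exact ⟨M, h, inAddOf_self M⟩
  | succ n ih =>
    obtain ⟨W, C, f, g, hs, hW, hC⟩ := h
    obtain ⟨T, hT, hTC⟩ := ih hC
    exact ⟨_, hω W T hW hT, W, C, f, g, hs,
      (inAddOf_self W).mono_isSummand (isSummand_prod_left W T),
      hTC.mono fun V hV ↦ hV.mono_isSummand (isSummand_prod_right W T)⟩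

theorem HasAddCoresolution.exists_hasCoresolution {T L : ModuleCat.{u} A}
    (h : HasAddCoresolution T L) : ∃ n, HasCoresolution (InAddOf fun X ↦ X = T) n L := by
  obtain ⟨C, d, f, hf, hfd, hd, hC, m, hm⟩ := h
  refine ⟨m, ?_⟩
  induction m generalizing C L with
  | zero =>
    have := hm 0 le_rfl
    exact (hC 0).of_isSummand ⟨f, 0, LinearMap.ext fun x ↦ hf (Subsingleton.elim _ _)⟩
  | succ m ih =>
    refine ⟨C 0, ModuleCat.of A (LinearMap.range (d 0)), f, (d 0).rangeRestrict,
      ⟨hf, fun x ↦ ?_, (d 0).surjective_rangeRestrict⟩, hC 0,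
      ih (fun i ↦ C (i + 1)) (fun i ↦ d (i + 1)) (LinearMap.range (d 0)).subtype
        Subtype.val_injective (fun x ↦ ?_) (fun i ↦ hd (i + 1)) (fun i ↦ hC (i + 1))
        fun i hi ↦ hm (i + 1) (by omega)⟩
    · rw [← hfd x, Subtype.ext_iff]
      rfl
    · rw [hd 0 x]
      simp

theorem hasAddCoresolution_of_subsingleton (T L : ModuleCat.{u} A) [Subsingleton L] :
    HasAddCoresolution T L :=
  ⟨fun _ ↦ L, fun _ ↦ 0, 0, Function.injective_of_subsingleton _,
    fun x ↦ ⟨fun _ ↦ ⟨x, Subsingleton.elim _ _⟩, fun _ ↦ Subsingleton.elim _ _⟩,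
    fun _ x ↦ ⟨fun _ ↦ ⟨x, Subsingleton.elim _ _⟩, fun _ ↦ Subsingleton.elim _ _⟩,
    fun _ ↦ (inAddOf_self T).of_isSummand ⟨0, 0, LinearMap.ext fun _ ↦ Subsingleton.elim _ _⟩,
    0, fun _ _ ↦ ‹_›⟩

theorem ShortExact.hasAddCoresolution {T L W C : ModuleCat.{u} A} {f : L →ₗ[A] W}
    {g : W →ₗ[A] C} (h : ShortExact f g) (hW : InAddOf (fun X ↦ X = T) W)
    (hC : HasAddCoresolution T C) : HasAddCoresolution T L := by
  obtain ⟨D, d, e, he, hed, hd, hD, m, hm⟩ := hC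
  refine ⟨fun | 0 => W | i + 1 => D i, fun | 0 => e ∘ₗ g | i + 1 => d i, f, h.1, fun x ↦ ?_,
    fun i ↦ ?_, fun i ↦ ?_, m + 1, fun i hi ↦ ?_⟩
  · rw [← h.2.1 x]
    exact map_eq_zero_iff e he
  · cases i with
    | zero =>
      intro x
      refine (hed x).trans ⟨?_, ?_⟩
      · rintro ⟨y, rfl⟩
        obtain ⟨z, rfl⟩ := h.2.2 y
        exact ⟨z, rfl⟩
      · rintro ⟨z, rfl⟩
        exact ⟨g z, rfl⟩
    | succ i => exact hd i
  · cases i with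
    | zero => exact hW
    | succ i => exact hD i
  · cases i with
    | zero => omega
    | succ i => exact hm i (by omega)

theorem HasCoresolution.hasAddCoresolution {T L : ModuleCat.{u} A}
    (h : HasCoresolution (InAddOf fun X ↦ X = T) n L) : HasAddCoresolution T L := by
  induction n generalizing L with
  | zero =>
    exact ShortExact.hasAddCoresolution (C := ModuleCat.of A PUnit) (f := LinearMap.id) (g := 0)
      ⟨Function.injective_id, fun x ↦ ⟨fun _ ↦ ⟨x, rfl⟩, fun _ ↦ rfl⟩,
        Function.surjective_to_subsingleton _⟩ h
      (have : Subsingleton (ModuleCat.of A PUnit) := inferInstanceAs (Subsingleton PUnit)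
       hasAddCoresolution_of_subsingleton T _)
  | succ n ih =>
    obtain ⟨W, C, f, g, hs, hW, hC⟩ := h
    exact hs.hasAddCoresolution hW (ih hC)

end Coresolutions

section Tilting

variable {A : Type u} [Ring A] {T Y : ModuleCat.{u} A}

theorem IsTilting.exists_approx (R : Type u) [CommRing R] [IsArtinianRing R] [Algebra R A]
    [Module.Finite R A] (hT : IsTilting T) (hYf : Module.Finite A Y)
    (hY : ExtVanish T Y) :
    ∃ (K U : ModuleCat.{u} A) (a : K →ₗ[A] U) (b : U →ₗ[A] Y), ShortExact a b ∧
      Module.Finite A K ∧ ExtVanish T K ∧ InAddOf (fun X ↦ X = T) U := by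
  have hA : IsArtinianRing A := IsArtinianRing.of_finite R A
  have hTf := hT.1
  obtain ⟨k, φ, hφ⟩ := exists_hom_approx (A := A) R (T := T) (Y := Y)
  let U := ModuleCat.of A (Fin k → T)
  have hU : InAddOf (fun X ↦ X = T) U := inAddOf_pow T k
  have hUf : Module.Finite A U := (inferInstance : Module.Finite A (Fin k → T))
  have hs : Function.Surjective (φ : U →ₗ[A] Y) := by
    intro y
    obtain ⟨n, hn⟩ := hT.2.2.2.exists_hasCoresolution
    obtain ⟨V, f, hf, ψ, hψ⟩ : ∃ (V : ModuleCat.{u} A) (f : A →ₗ[A] V),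
        InAddOf (fun X ↦ X = T) V ∧ ∃ ψ : V →ₗ[A] Y, ψ ∘ₗ f = LinearMap.toSpanSingleton A Y y := by
      cases n with
      | zero => exact ⟨_, LinearMap.id, hn, _, LinearMap.comp_id _⟩
      | succ n =>
        obtain ⟨V, C, f, g, hs, hV, hC⟩ := hn
        exact ⟨V, f, hV, exists_extend_of_ext_one hs
          (hC.extVanish (fun W hW ↦ extVanish_left_of_inAddOf hW hY) 1 one_pos) _⟩
    obtain ⟨h, hh⟩ := exists_comp_eq_of_inAddOf (Z := U) hφ hf ψ
    refine ⟨h (f 1), ?_⟩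
    have h₁ := LinearMap.congr_fun hh (f 1)
    have h₂ := LinearMap.congr_fun hψ 1
    simp only [LinearMap.comp_apply, LinearMap.toSpanSingleton_apply, one_smul] at h₁ h₂
    rw [h₁, h₂]
  have hk := shortExact_ker (M₂ := U) hs
  have hTU : ExtVanish T U := extVanish_right_of_inAddOf hU hT.2.2.1
  refine ⟨_, U, _, _, hk, hk.finite_left hUf, ?_, hU⟩
  rintro (_ | _ | i) hi
  · omega
  · exact ext_one_left_of_lift hk hφ (hTU 1 one_pos)
  · exact hk.above_cov_left (m := 0) hY (ExtVanishAbove.mono hTU zero_le_one) _ (by omega)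

theorem IsTilting.extVanish (R : Type u) [CommRing R] [IsArtinianRing R] [Algebra R A]
    [Module.Finite R A] (hT : IsTilting T) {W : ModuleCat.{u} A} (hW : ∃ n, pdLE W n)
    (hWT : ExtVanish W T) (hYf : Module.Finite A Y) (hY : ExtVanish T Y) : ExtVanish W Y := by
  obtain ⟨n, hn⟩ := hW
  have key : ∀ (j : ℕ) (Y : ModuleCat.{u} A), Module.Finite A Y → ExtVanish T Y →
      ExtVanishAbove (n - j) W Y := by
    intro j
    induction j with
    | zero => exact fun Y _ _ ↦ pdLE_iff.1 hn Y
    | succ j ih =>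
      intro Y hYf hY
      obtain ⟨K, U, a, b, hs, hK, hTK, hU⟩ := hT.exists_approx R hYf hY
      exact hs.above_cov_right
        (ExtVanishAbove.mono (extVanish_right_of_inAddOf hU hWT) (Nat.zero_le _))
        ((ih K hK hTK).mono (by omega))
  exact (key n Y hYf hY).mono (by omega)

theorem IsTilting.inAddOf (R : Type u) [CommRing R] [IsArtinianRing R] [Algebra R A]
    [Module.Finite R A] (hT : IsTilting T) {W : ModuleCat.{u} A} (hW : InP W)
    (hTW : ExtVanish T W) (hWT : ExtVanish W T) : InAddOf (fun X ↦ X = T) W := by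
  obtain ⟨K, U, a, b, hs, hK, hTK, hU⟩ := hT.exists_approx R hW.1 hTW
  exact hU.of_isSummand (hs.isSummand_right (hT.extVanish R hW.2 hWT hK hTK 1 one_pos))

end Tilting

section ResolvingToTilting

variable {A : Type u} [Ring A] {X : ModuleCat.{u} A → Prop}

theorem Resolving.exists_hasCoresolution (R : Type u) [CommRing R] [IsArtinianRing R] [Algebra R A]
    [Module.Finite R A] (hX : Resolving X) (hP : ∀ M, X M → InP M)
    (hc : ContravariantlyFinite X) {M : ModuleCat.{u} A} (hM : X M) :
    ∃ n, HasCoresolution (fun W ↦ X W ∧ InPerpOf X W) n M := by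
  have hA : IsArtinianRing A := IsArtinianRing.of_finite R A
  obtain ⟨n, hn⟩ := exists_pdLE hX hP hc
  refine ⟨n, ?_⟩
  have hMn : ∀ N, X N → ExtVanishAbove n N M := fun N hN ↦ pdLE_iff.1 (hn N hN) M
  clear hn
  induction n generalizing M with
  | zero => exact ⟨hM, hMn⟩
  | succ n ih =>
    have hMf := (hP M hM).1
    obtain ⟨I, f, hIf, hI, hf⟩ := exists_finite_injective_embedding R M hMf
    have hs := shortExact_mkQ hf
    obtain ⟨-, Y, C, a, g, hs', hC, hY, -⟩ := exists_hasSpecialApprox hX hP hc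
      (M := ModuleCat.of A (I ⧸ LinearMap.range f))
      (inferInstance : Module.Finite A (I ⧸ LinearMap.range f))
    obtain ⟨E, f', g', a', b', hE, hE'⟩ := hs.exists_pullback hs'
    have hEX : InPerpOf X E := hY.mid hE' fun N _ i hi ↦ subsingleton_ext_of_injective hI i hi
    refine ⟨E, C, f', g', hE, ⟨hX.2.1 _ _ _ _ _ hE hM hC, hEX⟩, ih hC fun N hN ↦ ?_⟩
    exact hE.above_cov_right (ExtVanishAbove.mono (hEX N hN) (Nat.zero_le n)) (hMn N hN)

theorem Resolving.exists_isTilting (R : Type u) [CommRing R] [IsArtinianRing R] [Algebra R A]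
    [Module.Finite R A] (hX : Resolving X) (hP : ∀ M, X M → InP M)
    (hc : ContravariantlyFinite X) :
    ∃ T : ModuleCat.{u} A, IsTilting T ∧
      ∀ M, (X M ∧ InPerpOf X M) ↔ InAddOf (fun Y ↦ Y = T) M := by
  have hA : IsArtinianRing A := IsArtinianRing.of_finite R A
  obtain ⟨n, hn⟩ := hX.exists_hasCoresolution R hP hc (hX.1 (ModuleCat.of A A)
    (inferInstance : Module.Finite A A) (inferInstance : Module.Projective A A))
  obtain ⟨T, ⟨hTX, hTp⟩, hT⟩ := hn.exists_single fun W W' hW hW' ↦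
    ⟨hX.prod hW.1 hW'.1, hW.2.mid (shortExact_prod W W') hW'.2⟩
  have hTt : IsTilting T := ⟨(hP T hTX).1, (hP T hTX).2, hTp T hTX, hT.hasAddCoresolution⟩
  refine ⟨T, hTt, fun M ↦ ⟨fun ⟨hM, hMp⟩ ↦ hTt.inAddOf R (hP M hM) (hMp T hTX) (hTp M hM),
    fun hM ↦ ⟨?_, fun N hN ↦ extVanish_right_of_inAddOf hM (hTp N hN)⟩⟩⟩
  exact hM.of_closed (fun _ ↦ hX.of_subsingleton) hX.2.1 (fun _ _ ↦ hX.of_isSummand hP) hTX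

end ResolvingToTilting

section TiltingToResolving

variable {A : Type u} [Ring A] {T M : ModuleCat.{u} A}

/-- The modules `M` in `𝒫` with `Ext^i(M, Y) = 0` for `i > 0` and all finitely generated `Y` in
`T^⊥`. -/
def TiltingResolving (T M : ModuleCat.{u} A) : Prop :=
  InP M ∧ ∀ Y : ModuleCat.{u} A, Module.Finite A Y → ExtVanish T Y → ExtVanish M Y

theorem resolving_tiltingResolving [IsNoetherianRing A] (T : ModuleCat.{u} A) :
    Resolving (TiltingResolving T) := by
  refine ⟨fun M hf hp ↦ ⟨⟨hf, 0, pdLE_of_projective hp 0⟩,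
    fun Y _ _ ↦ extVanish_of_projective hp Y⟩, fun M₁ M₂ M₃ f g h h₁ h₃ ↦ ⟨⟨?_, ?_⟩, ?_⟩,
    fun M₁ M₂ M₃ f g h h₂ h₃ ↦ ⟨⟨h.finite_left h₂.1.1, ?_⟩, ?_⟩⟩
  · exact h.finite_mid h₁.1.1 h₃.1.1
  · obtain ⟨n₁, hn₁⟩ := h₁.1.2
    obtain ⟨n₃, hn₃⟩ := h₃.1.2
    exact ⟨max n₁ n₃, h.pdLE_mid (hn₁.mono (le_max_left _ _)) (hn₃.mono (le_max_right _ _))⟩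
  · exact fun Y hYf hY ↦ h.above_contra_mid (m := 0) (h₁.2 Y hYf hY) (h₃.2 Y hYf hY)
  · obtain ⟨n₂, hn₂⟩ := h₂.1.2
    obtain ⟨n₃, hn₃⟩ := h₃.1.2
    exact ⟨max n₂ n₃, h.pdLE_left (hn₂.mono (le_max_left _ _))
      (hn₃.mono ((le_max_right _ _).trans (Nat.le_succ _)))⟩
  · exact fun Y hYf hY ↦ h.above_contra_left (m := 0) (h₂.2 Y hYf hY)
      (ExtVanishAbove.mono (h₃.2 Y hYf hY) zero_le_one)

theorem IsTilting.tiltingResolving_of_inAddOf (hT : IsTilting T)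
    (hM : InAddOf (fun Y ↦ Y = T) M) : TiltingResolving T M := by
  obtain ⟨n, hn⟩ := hT.2.1
  obtain ⟨k, hk⟩ := inAddOf_eq_iff.1 hM
  have hTf := hT.1
  refine ⟨⟨hk.finite (inferInstance : Module.Finite A (Fin k → T)), n, pdLE_iff.2 fun N ↦ ?_⟩,
    fun Y _ hY ↦ extVanish_left_of_inAddOf hM hY⟩
  exact hM.of_closed (C := fun M ↦ ExtVanishAbove n M N)
    (fun M _ ↦ pdLE_iff.1 (pdLE_of_projective (Module.Projective.of_free (P := M)) n) N)
    (fun _ _ _ _ _ h ↦ h.above_contra_mid) (fun _ _ ↦ above_of_isSummand_left) (pdLE_iff.1 hn N)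

theorem IsTilting.exists_shortExact (R : Type u) [CommRing R] [IsArtinianRing R] [Algebra R A]
    [Module.Finite R A] (hT : IsTilting T) {m : ℕ} (hMf : Module.Finite A M)
    (hM : ExtVanishAbove m T M) :
    ∃ (Y Z : ModuleCat.{u} A) (a : Y →ₗ[A] Z) (b : Z →ₗ[A] M), ShortExact a b ∧
      Module.Finite A Y ∧ ExtVanish T Y ∧ TiltingResolving T Z := by
  have hA : IsArtinianRing A := IsArtinianRing.of_finite R A
  induction m generalizing M with
  | zero =>
    obtain ⟨K, U, a, b, hs, hK, hTK, hU⟩ := hT.exists_approx R hMf hM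
    exact ⟨K, U, a, b, hs, hK, hTK, hT.tiltingResolving_of_inAddOf hU⟩
  | succ m ih =>
    obtain ⟨I, f, hIf, hI, hf⟩ := exists_finite_injective_embedding R M hMf
    have hs := shortExact_mkQ hf
    have hIT : ExtVanish T I := fun i hi ↦ subsingleton_ext_of_injective hI i hi
    obtain ⟨Y, W, a, b, hs', hYf, hY, hW⟩ := ih
      (M := ModuleCat.of A (I ⧸ LinearMap.range f))
      (inferInstance : Module.Finite A (I ⧸ LinearMap.range f))
      (hs.above_cov_right (ExtVanishAbove.mono hIT (Nat.zero_le m)) hM)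
    obtain ⟨E, f', g', a', b', hE, hE'⟩ := hs.exists_pullback hs'
    obtain ⟨K, U, c, d, hU, hKf, hK, hUT⟩ := hT.exists_approx R
      (hE.finite_mid hMf hW.1.1) (hE'.above_cov_mid (m := 0) hY hIT)
    obtain ⟨Z, p, q, i, hZ, hZ'⟩ := hE.exists_ker_comp hU
    exact ⟨K, Z, p, q, hZ, hKf, hK, (resolving_tiltingResolving T).2.2 _ _ _ _ _ hZ'
      (hT.tiltingResolving_of_inAddOf hUT) hW⟩

theorem IsTilting.contravariantlyFinite (R : Type u) [CommRing R] [IsArtinianRing R] [Algebra R A]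
    [Module.Finite R A] (hT : IsTilting T) :
    ContravariantlyFinite (TiltingResolving T) := by
  intro M hM
  obtain ⟨n, hn⟩ := hT.2.1
  obtain ⟨Y, Z, a, b, hs, hYf, hY, hZ⟩ := hT.exists_shortExact R hM (pdLE_iff.1 hn M)
  exact ⟨Z, b, hZ, fun L hL g ↦ exists_lift_of_ext_one hs (hL.2 Y hYf hY 1 one_pos) g⟩

theorem IsTilting.tiltingResolving_and_inPerpOf_iff (R : Type u) [CommRing R] [IsArtinianRing R]
    [Algebra R A] [Module.Finite R A] (hT : IsTilting T) :
    (TiltingResolving T M ∧ InPerpOf (TiltingResolving T) M) ↔ InAddOf (fun Y ↦ Y = T) M := by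
  have hTX := hT.tiltingResolving_of_inAddOf (inAddOf_self T)
  exact ⟨fun ⟨hM, hMp⟩ ↦ hT.inAddOf R hM.1 (hMp T hTX) (hM.2 T hT.1 hT.2.2.1),
    fun hM ↦ ⟨hT.tiltingResolving_of_inAddOf hM,
      fun N hN ↦ extVanish_right_of_inAddOf hM (hN.2 T hT.1 hT.2.2.1)⟩⟩

end TiltingToResolving

/-- `𝒳 ↦ 𝒳 ∩ 𝒳^⊥` is a bijection between contravariantly finite resolving
subcategories of `𝒫` and equivalence classes of tilting modules (`𝒳 ∩ 𝒳^⊥ = add T`). -/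
theorem stmt_13 (Λ : Type u) [Ring Λ] (R : Type u) [CommRing R] [IsArtinianRing R]
    [Algebra R Λ] [Module.Finite R Λ] :
    (∀ X : ModuleCat.{u} Λᵐᵒᵖ → Prop,
        (∀ M, X M → InP M) → ContravariantlyFinite X → Resolving X →
        ∃ T : ModuleCat.{u} Λᵐᵒᵖ, IsTilting T ∧
          ∀ M, (X M ∧ InPerpOf X M) ↔ InAddOf (fun Y => Y = T) M) ∧
    (∀ X X' : ModuleCat.{u} Λᵐᵒᵖ → Prop,
        (∀ M, X M → InP M) → ContravariantlyFinite X → Resolving X →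
        (∀ M, X' M → InP M) → ContravariantlyFinite X' → Resolving X' →
        (∀ M, (X M ∧ InPerpOf X M) ↔ (X' M ∧ InPerpOf X' M)) →
        ∀ M, X M ↔ X' M) ∧
    (∀ T : ModuleCat.{u} Λᵐᵒᵖ, IsTilting T →
        ∃ X : ModuleCat.{u} Λᵐᵒᵖ → Prop,
          (∀ M, X M → InP M) ∧ ContravariantlyFinite X ∧ Resolving X ∧
          ∀ M, (X M ∧ InPerpOf X M) ↔ InAddOf (fun Y => Y = T) M) := by
  have hΛ : Module.Finite R Λᵐᵒᵖ :=
    Module.Finite.equiv (MulOpposite.opLinearEquiv R : Λ ≃ₗ[R] Λᵐᵒᵖ)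
  have hA : IsArtinianRing Λᵐᵒᵖ := IsArtinianRing.of_finite R Λᵐᵒᵖ
  refine ⟨fun X hP hc hX ↦ hX.exists_isTilting R hP hc, ?_, fun T hT ↦
    ⟨TiltingResolving T, fun M hM ↦ hM.1, hT.contravariantlyFinite R,
      resolving_tiltingResolving T, fun M ↦ hT.tiltingResolving_and_inPerpOf_iff R⟩⟩
  intro X X' hP hc hX hP' hc' hX' h M
  constructor
  · intro hM
    obtain ⟨n, hn⟩ := hX.exists_hasCoresolution R hP hc hM
    exact hn.mem hX' fun W hW ↦ ((h W).1 hW).1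
  · intro hM
    obtain ⟨n, hn⟩ := hX'.exists_hasCoresolution R hP' hc' hM
    exact hn.mem hX fun W hW ↦ ((h W).2 hW).1
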